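/- arXiv:1902.07018 — 4 statements merged into one kernel-verified Lean document; each statement's English description precedes it below -/
import Mathlib

section
/- If r and k are both even positive integers, then R_ℓ(K_{1,r}, k) = (r-1)k + 1 = R(K_{1,r}, k). -/
/-- The star `K_{1,r}` with centre `0` and `r` leaves. -/
def starGraph (r : ℕ) : SimpleGraph (Fin (r + 1)) :=
  SimpleGraph.fromRel (fun a _ => a = 0)

/-- A colouring `c` of the edges of the complete graph on `Fin n` contains a
monochromatic copy of the graph `G`. -/
def HasMonoCopy {α β : Type*} (G : SimpleGraph α) {n : ℕ} (c : Sym2 (Fin n) → β) : Prop :=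
  ∃ (f : α → Fin n) (x : β), Function.Injective f ∧
    ∀ a b, G.Adj a b → c s(f a, f b) = x

/-- The `k`-colour list Ramsey number of a graph `G`: the least `n` for which one can
assign a list of `k` colours to each edge of `K_n` so that every colouring of the edges
from these lists contains a monochromatic copy of `G`. -/
noncomputable def listRamsey {α : Type*} (G : SimpleGraph α) (k : ℕ) : ℕ :=
  sInf { n : ℕ | ∃ L : Sym2 (Fin n) → Finset ℕ,
    (∀ e : Sym2 (Fin n), ¬ e.IsDiag → (L e).card = k) ∧
    ∀ c : Sym2 (Fin n) → ℕ, (∀ e : Sym2 (Fin n), ¬ e.IsDiag → c e ∈ L e) →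
      HasMonoCopy G c }

/-- The ordinary `k`-colour Ramsey number of a graph `G`: the least `n` such that every
`k`-colouring of the edges of `K_n` contains a monochromatic copy of `G`. -/
noncomputable def ramsey {α : Type*} (G : SimpleGraph α) (k : ℕ) : ℕ :=
  sInf { n : ℕ | ∀ c : Sym2 (Fin n) → Fin k, HasMonoCopy G c }

/-!
If no colour class of a `k`-colouring of the complete graph on `(r - 1) * k + 1` vertices contains
a star with `r` leaves, then every colour class is regular of the odd degree `r - 1` on an odd
number of vertices, which is impossible.

Conversely, split `(r - 1) * k` vertices into `r - 1` blocks of size `k`. If every vertex sends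
edges of distinct colours into each block, then no vertex has more than `r - 1` edges of one colour.
For lists of size `k`, such a colouring exists inside a block by the Häggkvist–Janssen theorem on
complete graphs of even order, and between two blocks by Galvin's theorem. The first is proved by
the Combinatorial Nullstellensatz for the product of the Vandermonde determinants of the vertices:
every term of its expansion is a family of rankings of the edges at each vertex, and we exhibit one
whose monomial occurs in no other term. In the second, stable matchings provide the kernels of the
line graph of the complete bipartite graph.
-/

open Finset

/-- A family of rankings is determined by its sums if no other family `π` has the same sums
`π v w + π w v`. Here `ρ v w` is the rank that the vertex `v` gives to the edge `vw`; for `w = v` it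
is a spare rank, which makes every `ρ v` a permutation. -/
def IsDeterminedBySums {n : ℕ} (ρ : Fin n → Equiv.Perm (Fin n)) : Prop :=
  ∀ π : Fin n → Equiv.Perm (Fin n),
    (∀ v w, (π v w : ℕ) + π w v = ρ v w + ρ w v) → π = ρ

/-- The rank `ρ v w` is forced by the ranks of the edges that precede `vw` in the order given by
`t`. Suppose `π` has the same sums as `ρ`, but `v` gives the rank `ρ v w` to the edge `vw'` instead.
Then `w'` must give `v` the rank `ρ w' u` of some `u ≠ v`, for which the displayed equation holds,
so `π` and `ρ` differ both at `vw'` and at `w'u`, one of which precedes `vw`. -/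
def IsForced {n : ℕ} {α : Type*} [LT α] (ρ : Fin n → Equiv.Perm (Fin n)) (t : Fin n → Fin n → α)
    (v w : Fin n) : Prop :=
  ∀ w' u, w' ≠ v → u ≠ v → u ≠ w' →
    (ρ v w + ρ w' u : ℕ) = ρ v w' + ρ w' v → t v w' < t v w ∨ t w' u < t v w

section Determined

variable {n : ℕ} {α : Type*} {π ρ : Fin n → Equiv.Perm (Fin n)} {t : Fin n → Fin n → α}

lemma IsForced.eq [LT α] {v w : Fin n} (hforced : IsForced ρ t v w) (hvw : v ≠ w)
    (hsum : ∀ v w, (π v w : ℕ) + π w v = ρ v w + ρ w v)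
    (hearlier : ∀ x y, t x y < t v w → π x y = ρ x y) : π v w = ρ v w := by
  have hdiag (x : Fin n) : π x x = ρ x x := Fin.ext (by have := hsum x x; lia)
  obtain ⟨w', hw'⟩ := (π v).surjective (ρ v w)
  obtain ⟨u, hu⟩ := (ρ w').surjective (π w' v)
  have hv : w' ≠ v := by
    rintro rfl
    exact hvw ((ρ w').injective (by rw [← hdiag, hw']))
  by_contra hne
  have hw : w' ≠ w := by
    rintro rfl
    exact hne hw'
  have hw'_wrong : π v w' ≠ ρ v w' := fun h => hw ((ρ v).injective (h.symm.trans hw'))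
  have huv : u ≠ v := by
    rintro rfl
    exact hw'_wrong (Fin.ext (by have := hsum u w'; lia))
  have huw' : u ≠ w' := by
    rintro rfl
    exact huv ((π u).injective (by rw [hdiag, hu]))
  have hbalance : (ρ v w + ρ w' u : ℕ) = ρ v w' + ρ w' v := by
    rw [← hw', hu, hsum]
  rcases hforced w' u hv huv huw' hbalance with h | h
  · exact hw'_wrong (hearlier v w' h)
  · exact huv ((π w').injective (by rw [hearlier w' u h, hu]))

lemma isDeterminedBySums_of_isForced [LT α] [WellFoundedLT α] (ht : ∀ v w, t v w = t w v)
    (hforced : ∀ v w, v ≠ w → IsForced ρ t v w ∨ IsForced ρ t w v) : IsDeterminedBySums ρ := by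
  intro π hsum
  suffices h : ∀ a v w, t v w = a → π v w = ρ v w from
    funext fun v => Equiv.ext fun w => h _ v w rfl
  intro a
  induction a using WellFoundedLT.induction with
  | _ a ih =>
    rintro v w rfl
    rcases eq_or_ne v w with rfl | hvw
    · exact Fin.ext (by have := hsum v v; lia)
    rcases hforced v w hvw with h | h
    · exact h.eq hvw hsum fun x y hxy => ih _ hxy x y rfl
    · have hwv : π w v = ρ w v := h.eq hvw.symm hsum fun x y hxy => ih _ (ht v w ▸ hxy) x y rfl
      exact Fin.ext (by have := hsum v w; lia)

end Determined

section EdgeRank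

variable {m u v w w' : ℕ}

/-- The end of the edge `vw` that ranks it by `edgeLevel m v w`; the other end is left with what
remains of `edgeSum m v w`. The vertices are `0, …, 2m - 1`, and the last one, `2m - 1`, plays the
role of a point at infinity. The chooser of an edge is its tail when the Hamiltonian paths described
at `edgeLevel` are directed towards infinity. -/
def edgeChooser (m v w : ℕ) : ℕ :=
  if w = 2 * m - 1 then v
  else if v = 2 * m - 1 then w
  else if (v + w) % 2 = 1 then min v w
  else max v w

/-- The index of the class containing the edge `vw` in the partition of the edges of the complete
graph on `2m` vertices into `m` Hamiltonian paths. The `k`-th path runs through the point at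
infinity `2m - 1`, from which the zigzags `k, k - 1, k + 1, k - 2, …` and
`k + m, k + m - 1, k + m + 1, …` set out and together exhaust the other vertices. -/
def edgeLevel (m v w : ℕ) : ℕ :=
  if w = 2 * m - 1 then (if v < m then v else v - m)
  else if v = 2 * m - 1 then (if w < m then w else w - m)
  else if v + w + 1 < 2 * m then (v + w + 1) / 2
  else (v + w + 1 - 2 * m) / 2

/-- The sum of the ranks that `v` and `w` give to the edge `vw`. -/
def edgeSum (m v w : ℕ) : ℕ :=
  if w = 2 * m - 1 then (if v < m then 2 * m - 2 else m - 2)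
  else if v = 2 * m - 1 then (if w < m then 2 * m - 2 else m - 2)
  else if v + w + 1 < 2 * m then 2 * m - 1
  else 2 * m - 2

/-- The rank that `v` gives to the edge `vw`, for `v, w < 2 * m`; the value at `w = v` is the spare
rank `2 * m - 1`. -/
def edgeRank (m v w : ℕ) : ℕ :=
  if v = w then 2 * m - 1
  else if edgeChooser m v w = v then edgeLevel m v w
  else edgeSum m v w - edgeLevel m v w

lemma edgeRank_self (m v : ℕ) : edgeRank m v v = 2 * m - 1 := if_pos rfl

lemma edgeChooser_comm (m v w : ℕ) : edgeChooser m v w = edgeChooser m w v := by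
  unfold edgeChooser; split_ifs <;> omega

lemma edgeLevel_comm (m v w : ℕ) : edgeLevel m v w = edgeLevel m w v := by
  unfold edgeLevel; split_ifs <;> omega

lemma edgeSum_comm (m v w : ℕ) : edgeSum m v w = edgeSum m w v := by
  unfold edgeSum; split_ifs <;> omega

lemma edgeSum_lt (hv : v < 2 * m) : edgeSum m v w < 2 * m := by
  unfold edgeSum; split_ifs <;> omega

lemma edge_cases_last (hv : v < 2 * m - 1) :
    edgeChooser m v (2 * m - 1) = v ∧
      (v < m ∧ edgeLevel m v (2 * m - 1) = v ∧ edgeSum m v (2 * m - 1) + 2 = 2 * m ∨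
        v = m + edgeLevel m v (2 * m - 1) ∧ edgeSum m v (2 * m - 1) + 2 = m) := by
  unfold edgeChooser edgeLevel edgeSum
  split_ifs <;> omega

lemma edge_cases_of_lt (hv : v < 2 * m - 1) (hw : w < 2 * m - 1) :
    v + w + 1 < 2 * m ∧ edgeSum m v w + 1 = 2 * m ∧
      2 * edgeLevel m v w ≤ v + w + 1 ∧ v + w ≤ 2 * edgeLevel m v w ∨
    2 * m ≤ v + w + 1 ∧ edgeSum m v w + 2 = 2 * m ∧
      2 * m + 2 * edgeLevel m v w ≤ v + w + 1 ∧ v + w ≤ 2 * m + 2 * edgeLevel m v w := by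
  unfold edgeLevel edgeSum
  split_ifs <;> omega

lemma edgeRank_cases (hv : v < 2 * m) (hw : w < 2 * m) (hvw : v ≠ w) :
    edgeChooser m v w = v ∧ edgeRank m v w = edgeLevel m v w ∨
    edgeChooser m v w = w ∧ edgeRank m v w + edgeLevel m v w = edgeSum m v w := by
  have hle : edgeLevel m v w ≤ edgeSum m v w := by
    unfold edgeLevel edgeSum; split_ifs <;> omega
  have hends : edgeChooser m v w = v ∨ edgeChooser m v w = w := by
    unfold edgeChooser; split_ifs <;> omega
  unfold edgeRank
  split_ifs <;> omega

lemma edgeRank_add (hv : v < 2 * m) (hw : w < 2 * m) (hvw : v ≠ w) :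
    edgeRank m v w + edgeRank m w v = edgeSum m v w := by
  have h₁ := edgeRank_cases hv hw hvw
  have h₂ := edgeRank_cases hw hv hvw.symm
  rw [edgeChooser_comm m w, edgeLevel_comm m w, edgeSum_comm m w] at h₂
  omega

lemma edgeRank_cases_of_lt (hv : v < 2 * m - 1) (hw : w < 2 * m - 1) (hvw : v ≠ w) :
    (v < w ∧ (v + w) % 2 = 1 ∨ w < v ∧ (v + w) % 2 = 0) ∧ edgeChooser m v w = v ∧
      edgeRank m v w = edgeLevel m v w ∨
    (v < w ∧ (v + w) % 2 = 0 ∨ w < v ∧ (v + w) % 2 = 1) ∧ edgeChooser m v w = w ∧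
      edgeRank m v w + edgeLevel m v w = edgeSum m v w := by
  have hparity : (edgeChooser m v w = v → v < w ∧ (v + w) % 2 = 1 ∨ w < v ∧ (v + w) % 2 = 0) ∧
      (edgeChooser m v w = w → v < w ∧ (v + w) % 2 = 0 ∨ w < v ∧ (v + w) % 2 = 1) := by
    unfold edgeChooser
    split_ifs <;> omega
  exact (edgeRank_cases (by omega) (by omega) hvw).imp (fun h => ⟨hparity.1 h.1, h⟩)
    fun h => ⟨hparity.2 h.1, h⟩

lemma edgeRank_injOn_of_lt (hv : v < 2 * m - 1) (hw : w < 2 * m - 1)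
    (hw' : w' < 2 * m - 1) (hvw : v ≠ w) (hvw' : v ≠ w')
    (h : edgeRank m v w = edgeRank m v w') : w = w' := by
  have h₁ := edge_cases_of_lt hv hw
  have h₂ := edge_cases_of_lt hv hw'
  rcases edgeRank_cases_of_lt hv hw hvw with ⟨hp, -, h₃⟩ | ⟨hp, -, h₃⟩ <;>
    rcases edgeRank_cases_of_lt hv hw' hvw' with ⟨hp', -, h₄⟩ | ⟨hp', -, h₄⟩ <;>
    rw [h] at h₃ <;> omega

lemma edgeRank_last_right (hv : v < 2 * m - 1) :
    v < m ∧ edgeRank m v (2 * m - 1) = v ∨ v = m + edgeRank m v (2 * m - 1) := by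
  have hrank : edgeRank m v (2 * m - 1) = edgeLevel m v (2 * m - 1) := by
    rw [edgeRank, if_neg hv.ne, if_pos (edge_cases_last hv).1]
  have := edge_cases_last hv
  omega

lemma edgeRank_last_left (hw : w < 2 * m - 1) :
    edgeRank m (2 * m - 1) w + w = 2 * m - 2 := by
  have h := edge_cases_last hw
  rw [edgeRank, if_neg hw.ne', edgeChooser_comm, h.1, if_neg hw.ne, edgeSum_comm, edgeLevel_comm]
  omega

lemma edgeRank_last_ne (hv : v < 2 * m - 1) (hw : w < 2 * m - 1) (hvw : v ≠ w) :
    edgeRank m v (2 * m - 1) ≠ edgeRank m v w := by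
  have h₁ := edgeRank_last_right hv
  have h₂ := edge_cases_of_lt hv hw
  rcases edgeRank_cases_of_lt hv hw hvw with ⟨hp, -, h₃⟩ | ⟨hp, -, h₃⟩ <;> omega

lemma edgeRank_injOn (hv : v < 2 * m) (hw : w < 2 * m) (hw' : w' < 2 * m)
    (hvw : v ≠ w) (hvw' : v ≠ w') (h : edgeRank m v w = edgeRank m v w') : w = w' := by
  obtain rfl | hv := Nat.le_sub_one_of_lt hv |>.eq_or_lt
  · have := edgeRank_last_left (m := m) (w := w) (by omega)
    have := edgeRank_last_left (m := m) (w := w') (by omega)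
    omega
  obtain rfl | hw := Nat.le_sub_one_of_lt hw |>.eq_or_lt <;>
    obtain rfl | hw' := Nat.le_sub_one_of_lt hw' |>.eq_or_lt
  · rfl
  · exact (edgeRank_last_ne hv hw' hvw' h).elim
  · exact (edgeRank_last_ne hv hw hvw h.symm).elim
  · exact edgeRank_injOn_of_lt hv hw hw' hvw hvw' h

lemma edgeRank_lt (hv : v < 2 * m) (hw : w < 2 * m) (hvw : v ≠ w) :
    edgeRank m v w < 2 * m - 1 := by
  obtain rfl | hv := Nat.le_sub_one_of_lt hv |>.eq_or_lt
  · have := edgeRank_last_left (m := m) (w := w) (by omega)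
    omega
  obtain rfl | hw := Nat.le_sub_one_of_lt hw |>.eq_or_lt
  · have := edgeRank_last_right hv
    omega
  · have := edge_cases_of_lt hv hw
    have := edgeRank_cases_of_lt hv hw hvw
    omega

/-- The order in which the edges are treated in the proof that `edgeRankPerm m` is determined by
its sums: by level, and within a level by chooser. -/
def edgeKey (m v w : ℕ) : ℕ ×ₗ ℕ := toLex (edgeLevel m v w, edgeChooser m v w)

lemma edgeKey_comm (m v w : ℕ) : edgeKey m v w = edgeKey m w v := by
  rw [edgeKey, edgeLevel_comm, edgeChooser_comm, edgeKey]

lemma edgeKey_lt_iff {k : ℕ} : edgeKey m v w < toLex (k, u) ↔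
    edgeLevel m v w < k ∨ edgeLevel m v w = k ∧ edgeChooser m v w < u :=
  Prod.Lex.toLex_lt_toLex

lemma edgeKey_lt_or_lt_of_lt {k : ℕ} (hv : v < 2 * m - 1) (hw' : w' < 2 * m - 1)
    (hu : u < 2 * m - 1) (hvw' : v ≠ w') (huv : u ≠ v) (huw' : w' ≠ u)
    (h : k + edgeRank m w' u = edgeSum m v w') :
    edgeKey m v w' < toLex (k, v) ∨ edgeKey m w' u < toLex (k, v) := by
  simp only [edgeKey_lt_iff]
  rcases edge_cases_of_lt hv hw' with ⟨h₁, h₁', h₁l, h₁r⟩ | ⟨h₁, h₁', h₁l, h₁r⟩ <;>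
  rcases edge_cases_of_lt hw' hu with ⟨h₂, h₂', h₂l, h₂r⟩ | ⟨h₂, h₂', h₂l, h₂r⟩ <;>
  rcases edgeRank_cases_of_lt hw' hu huw' with ⟨hp, hc, hr⟩ | ⟨hp, hc, hr⟩ <;>
  rcases edgeRank_cases_of_lt hv hw' hvw' with ⟨hp', hc', -⟩ | ⟨hp', hc', -⟩ <;> omega

lemma edgeKey_lt_or_lt_last_left {k : ℕ} (hv : v < 2 * m - 1) (hu : u < 2 * m - 1) (huv : u ≠ v)
    (h : k + edgeRank m (2 * m - 1) u = edgeSum m v (2 * m - 1)) :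
    edgeKey m v (2 * m - 1) < toLex (k, v) ∨ edgeKey m (2 * m - 1) u < toLex (k, v) := by
  have h₁ := edge_cases_last hv
  have h₂ := edge_cases_last hu
  have h₃ := edgeRank_last_left hu
  rw [edgeKey_comm m (2 * m - 1), edgeKey_lt_iff, edgeKey_lt_iff]
  omega

lemma edgeKey_lt_last_right {k : ℕ} (hv : v < 2 * m - 1) (hw' : w' < 2 * m - 1)
    (h : k + edgeRank m w' (2 * m - 1) = edgeSum m v w') : edgeKey m v w' < toLex (k, v) := by
  have h₁ := edgeRank_last_right hw'
  have h₂ := edge_cases_of_lt hv hw'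
  rw [edgeKey_lt_iff]
  omega

lemma edgeKey_lt_or_lt (hv : v < 2 * m) (hw' : w' < 2 * m) (hu : u < 2 * m) (hvw : v ≠ w)
    (hvw' : v ≠ w') (huv : u ≠ v) (huw' : w' ≠ u) (hc : edgeChooser m v w = v)
    (h : edgeRank m v w + edgeRank m w' u = edgeSum m v w') :
    edgeKey m v w' < edgeKey m v w ∨ edgeKey m w' u < edgeKey m v w := by
  have hv_lt : v < 2 * m - 1 := by
    unfold edgeChooser at hc
    split_ifs at hc <;> omega
  have hkey : edgeKey m v w = toLex (edgeLevel m v w, v) := by rw [edgeKey, hc]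
  rw [edgeRank, if_neg hvw, if_pos hc] at h
  rw [hkey]
  rcases Nat.le_sub_one_of_lt hw' |>.eq_or_lt with rfl | hw'
  · exact edgeKey_lt_or_lt_last_left hv_lt (by omega) huv h
  rcases Nat.le_sub_one_of_lt hu |>.eq_or_lt with rfl | hu
  · exact .inl (edgeKey_lt_last_right hv_lt hw' h)
  · exact edgeKey_lt_or_lt_of_lt hv_lt hw' hu hvw' huv huw' h

end EdgeRank

section EdgeRankPerm

variable {m : ℕ} {v w : Fin (2 * m)}

/-- The ranking `edgeRank m v` of the edges at `v`, as a permutation of `Fin (2 * m)`. -/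
noncomputable def edgeRankPerm (m : ℕ) (v : Fin (2 * m)) : Equiv.Perm (Fin (2 * m)) :=
  Equiv.ofBijective (fun w => ⟨edgeRank m v w, by
      rcases eq_or_ne (v : ℕ) w with hvw | hvw
      · rw [← hvw, edgeRank_self]
        omega
      · exact (edgeRank_lt v.2 w.2 hvw).trans_le (Nat.sub_le _ _)⟩) <|
    Finite.injective_iff_bijective.1 fun w w' h => by
      replace h : edgeRank m v w = edgeRank m v w' := congrArg Fin.val h
      by_cases hw : (v : ℕ) = w <;> by_cases hw' : (v : ℕ) = w'
      · exact Fin.ext (hw.symm.trans hw')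
      · exact absurd h (by rw [← hw, edgeRank_self]; exact (edgeRank_lt v.2 w'.2 hw').ne')
      · exact absurd h (by rw [← hw', edgeRank_self]; exact (edgeRank_lt v.2 w.2 hw).ne)
      · exact Fin.ext (edgeRank_injOn v.2 w.2 w'.2 hw hw' h)

lemma edgeRankPerm_apply (v w : Fin (2 * m)) : (edgeRankPerm m v w : ℕ) = edgeRank m v w := rfl

lemma edgeRankPerm_add_lt (hvw : v ≠ w) :
    (edgeRankPerm m v w + edgeRankPerm m w v : ℕ) < 2 * m :=
  (edgeRank_add v.2 w.2 (Fin.val_ne_of_ne hvw)).trans_lt (edgeSum_lt v.2)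

lemma isForced_edgeRankPerm (hvw : v ≠ w) (hc : edgeChooser m v w = v) :
    IsForced (edgeRankPerm m) (fun v w => edgeKey m v w) v w := by
  intro w' u hw'v huv huw' hbalance
  simp only [edgeRankPerm_apply] at hbalance
  rw [edgeRank_add v.2 w'.2 (Fin.val_ne_of_ne hw'v.symm)] at hbalance
  exact edgeKey_lt_or_lt v.2 w'.2 u.2 (Fin.val_ne_of_ne hvw)
    (Fin.val_ne_of_ne hw'v.symm) (Fin.val_ne_of_ne huv) (Fin.val_ne_of_ne huw'.symm) hc hbalance

lemma isDeterminedBySums_edgeRankPerm (m : ℕ) : IsDeterminedBySums (edgeRankPerm m) := by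
  refine isDeterminedBySums_of_isForced (t := fun v w => edgeKey m v w)
    (fun _ _ => edgeKey_comm ..) fun v w hvw => ?_
  rcases edgeRank_cases v.2 w.2 (Fin.val_ne_of_ne hvw) with h | h
  · exact .inl (isForced_edgeRankPerm hvw h.1)
  · exact .inr (isForced_edgeRankPerm hvw.symm (by rw [edgeChooser_comm, h.1]))

end EdgeRankPerm

section Nullstellensatz

variable {n : ℕ}

/-- The exponent that assigns to every edge the sum of the two ranks that its ends give it. -/
noncomputable def edgeExponent (π : Fin n → Equiv.Perm (Fin n)) : Sym2 (Fin n) →₀ ℕ :=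
  ∑ v, ∑ w, Finsupp.single s(v, w) (π v w : ℕ)

lemma edgeExponent_apply (π : Fin n → Equiv.Perm (Fin n)) (v w : Fin n) :
    edgeExponent π s(v, w) = if v = w then (π v v : ℕ) else π v w + π w v := by
  have hsplit (x y : Fin n) : Finsupp.single s(x, y) (π x y : ℕ) s(v, w) =
      (if v = x ∧ w = y then (π x y : ℕ) else 0) +
        if v ≠ w ∧ w = x ∧ v = y then (π x y : ℕ) else 0 := by
    simp only [Finsupp.single_apply, Sym2.eq_iff]
    grind
  simp only [edgeExponent, Finsupp.finsetSum_apply, hsplit, sum_add_distrib, ite_and, sum_ite_eq,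
    mem_univ, if_true, sum_ite_irrel, sum_const_zero]
  split_ifs <;> simp_all

lemma edgeExponent_degree (π : Fin n → Equiv.Perm (Fin n)) :
    (edgeExponent π).degree = n * ∑ i : Fin n, (i : ℕ) := by
  simp only [edgeExponent, map_sum, Finsupp.degree_single]
  rw [sum_congr rfl fun v _ => Equiv.sum_comp (π v) (fun i : Fin n => (i : ℕ))]
  simp

lemma IsDeterminedBySums.eq_of_edgeExponent_eq {π ρ : Fin n → Equiv.Perm (Fin n)}
    (hρ : IsDeterminedBySums ρ) (h : edgeExponent π = edgeExponent ρ) : π = ρ := by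
  refine hρ π fun v w => ?_
  have hvw := DFunLike.congr_fun h s(v, w)
  rw [edgeExponent_apply, edgeExponent_apply] at hvw
  split_ifs at hvw with heq
  · rw [← heq, hvw]
  · exact hvw

open MvPolynomial in
/-- The product over all vertices `v` of the Vandermonde determinant in the variables of the edges
at `v`. It vanishes unless the edges at each vertex have distinct values. Each vertex also carries
the loop `s(v, v)`, which corresponds to the spare rank. -/
noncomputable def edgePolynomial (n : ℕ) : MvPolynomial (Sym2 (Fin n)) ℤ :=
  ∏ v : Fin n, (Matrix.vandermonde fun w => (X s(v, w) : MvPolynomial (Sym2 (Fin n)) ℤ)).det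

lemma injective_of_eval_edgePolynomial_ne_zero {s : Sym2 (Fin n) → ℤ}
    (hs : MvPolynomial.eval s (edgePolynomial n) ≠ 0) (u : Fin n) :
    Function.Injective fun v => s s(u, v) := by
  rw [edgePolynomial, map_prod, prod_ne_zero_iff] at hs
  refine Matrix.det_vandermonde_ne_zero_iff.1 ?_
  simpa [Matrix.det_vandermonde] using hs u (mem_univ u)

open MvPolynomial in
lemma edgePolynomial_eq_sum (n : ℕ) :
    edgePolynomial n = ∑ π : Fin n → Equiv.Perm (Fin n),
      monomial (edgeExponent π) (∏ v, (Equiv.Perm.sign (π v) : ℤ)) := by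
  have hdet (v : Fin n) : (Matrix.vandermonde
      fun w => (X s(v, w) : MvPolynomial (Sym2 (Fin n)) ℤ)).det = ∑ σ : Equiv.Perm (Fin n),
        monomial (∑ w, Finsupp.single s(v, w) (σ w : ℕ)) (Equiv.Perm.sign σ : ℤ) := by
    rw [← Matrix.det_transpose, Matrix.det_apply']
    refine sum_congr rfl fun σ _ => ?_
    simp only [Matrix.transpose_apply, Matrix.vandermonde_apply, X_pow_eq_monomial]
    rw [← monomial_sum_one, ← map_intCast (C : ℤ →+* MvPolynomial (Sym2 (Fin n)) ℤ),
      C_mul_monomial, mul_one, Int.cast_id]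
  rw [edgePolynomial, prod_congr rfl fun v _ => hdet v, Fintype.prod_sum]
  refine sum_congr rfl fun π _ => ?_
  rw [edgeExponent, monomial_sum_index, map_prod, ← prod_mul_distrib]
  exact prod_congr rfl fun v _ => by rw [C_mul_monomial, mul_one]

lemma IsDeterminedBySums.coeff_edgePolynomial_ne_zero {ρ : Fin n → Equiv.Perm (Fin n)}
    (hρ : IsDeterminedBySums ρ) : (edgePolynomial n).coeff (edgeExponent ρ) ≠ 0 := by
  rw [edgePolynomial_eq_sum, MvPolynomial.coeff_sum, sum_eq_single ρ]
  · rw [MvPolynomial.coeff_monomial, if_pos rfl]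
    exact prod_ne_zero_iff.2 fun v _ => (Equiv.Perm.sign _).ne_zero
  · intro π _ hπ
    rw [MvPolynomial.coeff_monomial, if_neg fun h => hπ (hρ.eq_of_edgeExponent_eq h)]
  · exact fun h => absurd (mem_univ ρ) h

lemma totalDegree_edgePolynomial_le (ρ : Fin n → Equiv.Perm (Fin n)) :
    (edgePolynomial n).totalDegree ≤ (edgeExponent ρ).degree := by
  rw [edgePolynomial_eq_sum]
  refine MvPolynomial.totalDegree_finsetSum_le fun π _ =>
    (MvPolynomial.totalDegree_monomial_le _ _).trans_eq ?_
  exact (edgeExponent_degree π).trans (edgeExponent_degree ρ).symm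

theorem IsDeterminedBySums.exists_list_edge_coloring {ρ : Fin n → Equiv.Perm (Fin n)}
    (hρ : IsDeterminedBySums ρ) (L : Sym2 (Fin n) → Finset ℕ)
    (hL : ∀ e, edgeExponent ρ e < #(L e)) :
    ∃ c : Sym2 (Fin n) → ℕ, (∀ e, c e ∈ L e) ∧ ∀ u, Function.Injective fun v => c s(u, v) := by
  have hcoeff := hρ.coeff_edgePolynomial_ne_zero
  have hdeg : (edgePolynomial n).totalDegree = (edgeExponent ρ).degree :=
    (totalDegree_edgePolynomial_le ρ).antisymm
      (MvPolynomial.le_totalDegree (MvPolynomial.mem_support_iff.2 hcoeff))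
  obtain ⟨s, hs, heval⟩ :=
    MvPolynomial.combinatorial_nullstellensatz_exists_eval_nonzero _ _ hcoeff hdeg
      (fun e => (L e).map Nat.castEmbedding) fun e => by rw [card_map]; exact hL e
  simp only [mem_map, Nat.castEmbedding_apply] at hs
  choose c hc hcs using hs
  obtain rfl : (fun e => (c e : ℤ)) = s := funext hcs
  exact ⟨c, hc, fun u v w h =>
    injective_of_eval_edgePolynomial_ne_zero heval u (congrArg (Nat.cast : ℕ → ℤ) h)⟩

end Nullstellensatz

/-- The Häggkvist–Janssen theorem, strengthened to include the loops. -/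
theorem exists_list_edge_coloring_completeGraph {n : ℕ} (hn : Even n)
    (L : Sym2 (Fin n) → Finset ℕ) (hL : ∀ e, n ≤ #(L e)) :
    ∃ c : Sym2 (Fin n) → ℕ, (∀ e, c e ∈ L e) ∧ ∀ u, Function.Injective fun v => c s(u, v) := by
  obtain ⟨m, rfl⟩ := even_iff_two_dvd.1 hn
  refine (isDeterminedBySums_edgeRankPerm m).exists_list_edge_coloring L fun e => ?_
  induction e with | _ v w
  refine lt_of_lt_of_le ?_ (hL _)
  rw [edgeExponent_apply]
  split_ifs with hvw
  · exact Fin.is_lt _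
  · exact edgeRankPerm_add_lt hvw

section Galvin

variable {V I J : Type*}

/-- On `F`, adjacent vertices receive distinct colours. The relation `adj` may be reflexive. -/
def IsProperOn (adj : V → V → Prop) (F : Finset V) (c : V → ℕ) : Prop :=
  ∀ e ∈ F, ∀ f ∈ F, adj e f → c e = c f → e = f

lemma IsProperOn.mono {adj : V → V → Prop} {F F' : Finset V} {c : V → ℕ}
    (h : IsProperOn adj F c) (hF' : F' ⊆ F) : IsProperOn adj F' c :=
  fun e he f hf => h e (hF' he) f (hF' hf)

open Classical in
lemma IsProperOn.piecewise_const {adj : V → V → Prop} {F S : Finset V} {c : V → ℕ} {x : ℕ}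
    (hc : IsProperOn adj (F \ S) c) (hx : ∀ e ∈ F \ S, c e ≠ x)
    (hS : ∀ e ∈ S, ∀ f ∈ S, adj e f → e = f) :
    IsProperOn adj F (S.piecewise (fun _ => x) c) := by
  intro e he f hf hef
  by_cases heS : e ∈ S <;> by_cases hfS : f ∈ S <;>
    simp only [heS, hfS, piecewise_eq_of_mem, piecewise_eq_of_notMem, not_false_eq_true]
  · exact fun _ => hS e heS f hfS hef
  · exact fun h => absurd h.symm (hx f (mem_sdiff.2 ⟨hf, hfS⟩))
  · exact fun h => absurd h (hx e (mem_sdiff.2 ⟨he, heS⟩))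
  · exact hc e (mem_sdiff.2 ⟨he, heS⟩) f (mem_sdiff.2 ⟨hf, hfS⟩) hef

/-- A kernel of `F` for the relation `dom`: an `adj`-independent subset of `F` that dominates all
other members of `F`. -/
def IsKernel (adj dom : V → V → Prop) (F S : Finset V) : Prop :=
  S ⊆ F ∧ (∀ e ∈ S, ∀ f ∈ S, adj e f → e = f) ∧ ∀ e ∈ F, e ∉ S → ∃ f ∈ S, dom f e

open Classical in
lemma exists_list_coloring_of_isKernel {adj dom : V → V → Prop} {F : Finset V}
    (hker : ∀ F' ⊆ F, ∃ S, IsKernel adj dom F' S) {L : V → Finset ℕ}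
    (hL : ∀ e ∈ F, #{f ∈ F | dom f e} < #(L e)) :
    ∃ c : V → ℕ, (∀ e ∈ F, c e ∈ L e) ∧ IsProperOn adj F c := by
  induction F using Finset.strongInduction generalizing L with
  | _ F ih =>
    rcases F.eq_empty_or_nonempty with rfl | ⟨e₀, he₀⟩
    · exact ⟨fun _ => 0, by simp, by simp [IsProperOn]⟩
    obtain ⟨x, hx⟩ := card_pos.1 ((Nat.zero_le _).trans_lt (hL e₀ he₀))
    obtain ⟨S, hS, hindep, hdom⟩ := hker {f ∈ F | x ∈ L f} (filter_subset _ _)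
    have hSF : S ⊆ F := hS.trans (filter_subset _ _)
    have hne : S.Nonempty := by
      by_cases h : e₀ ∈ S
      · exact ⟨_, h⟩
      · exact (hdom e₀ (mem_filter.2 ⟨he₀, hx⟩) h).imp fun _ => And.left
    obtain ⟨c, hc, hproper⟩ : ∃ c : V → ℕ, (∀ e ∈ F \ S, c e ∈ (L e).erase x) ∧
        IsProperOn adj (F \ S) c := by
      refine ih (F \ S) (sdiff_ssubset hSF hne) (fun F' hF' => hker F' (hF'.trans sdiff_subset))
        fun e he => ?_
      rw [mem_sdiff] at he
      have hle := card_le_card (filter_subset_filter (dom · e) (sdiff_subset (s := F) (t := S)))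
      by_cases hxe : x ∈ L e
      · rw [card_erase_of_mem hxe]
        obtain ⟨f, hf, hfe⟩ := hdom e (mem_filter.2 ⟨he.1, hxe⟩) he.2
        refine Nat.lt_sub_of_add_lt (lt_of_le_of_lt (Nat.succ_le_of_lt (card_lt_card ?_))
          (hL e he.1))
        rw [ssubset_iff_of_subset (filter_subset_filter _ sdiff_subset)]
        exact ⟨f, mem_filter.2 ⟨hSF hf, hfe⟩, by simp [hf]⟩
      · rw [erase_eq_of_notMem hxe]
        exact hle.trans_lt (hL e he.1)
    refine ⟨S.piecewise (fun _ => x) c, fun e he => ?_,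
      hproper.piecewise_const (fun e he => ne_of_mem_erase (hc e he)) hindep⟩
    by_cases h : e ∈ S
    · simpa [h] using (mem_filter.1 (hS h)).2
    · simpa [h] using mem_of_mem_erase (hc e (mem_sdiff.2 ⟨he, h⟩))

/-- Adjacency or equality in the line graph of a bipartite graph whose edges are pairs `(i, j)`. -/
def LineAdj (e f : I × J) : Prop := e.1 = f.1 ∨ e.2 = f.2

/-- Galvin's orientation of the line graph given by an edge colouring `p`: at a vertex of `I` the
larger colour dominates, at a vertex of `J` the smaller one. -/
def Dominates (p : I × J → ℕ) (f e : I × J) : Prop :=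
  e.1 = f.1 ∧ p e < p f ∨ e.2 = f.2 ∧ p f < p e

open Classical in
lemma isKernel_filter_forall_le {p : I × J → ℕ} {F : Finset (I × J)}
    (hp : IsProperOn LineAdj F p)
    (hcol : ∀ e ∈ F, ∀ f ∈ F, (∀ g ∈ F, g.1 = f.1 → p g ≤ p f) → e.2 = f.2 → p e ≤ p f) :
    IsKernel LineAdj (Dominates p) F {e ∈ F | ∀ g ∈ F, g.1 = e.1 → p g ≤ p e} := by
  refine ⟨filter_subset _ _, fun e he f hf hef => ?_, fun e he heS => ?_⟩
  · rw [mem_filter] at he hf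
    refine hp e he.1 f hf.1 hef ?_
    rcases hef with h | h
    · exact (hf.2 e he.1 h).antisymm (he.2 f hf.1 h.symm)
    · exact (hcol e he.1 f hf.1 hf.2 h).antisymm (hcol f hf.1 e he.1 he.2 h.symm)
  · obtain ⟨f, hf, hmax⟩ := exists_max_image {f ∈ F | f.1 = e.1} p ⟨e, mem_filter.2 ⟨he, rfl⟩⟩
    simp only [mem_filter, and_imp] at hf hmax
    have hfS : f ∈ ({e ∈ F | ∀ g ∈ F, g.1 = e.1 → p g ≤ p e} : Finset (I × J)) :=
      mem_filter.2 ⟨hf.1, fun g hg h => hmax g hg (h.trans hf.2)⟩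
    refine ⟨f, hfS, .inl ⟨hf.2.symm, (hmax e he rfl).lt_of_ne fun h => heS ?_⟩⟩
    rwa [hp e he f hf.1 (.inl hf.2.symm) h]

lemma exists_isKernel_dominates {p : I × J → ℕ} {F : Finset (I × J)}
    (hp : IsProperOn LineAdj F p) :
    ∃ S, IsKernel LineAdj (Dominates p) F S := by
  classical
  induction F using Finset.strongInduction with
  | _ F ih =>
    by_cases h : ∀ e ∈ F, ∀ f ∈ F, (∀ g ∈ F, g.1 = f.1 → p g ≤ p f) → e.2 = f.2 → p e ≤ p f
    · exact ⟨_, isKernel_filter_forall_le hp h⟩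
    push Not at h
    obtain ⟨e, he, f, hf, hmax, hcol, hlt⟩ := h
    obtain ⟨S, hS, hindep, hdom⟩ := ih (F.erase e) (erase_ssubset he) (hp.mono (erase_subset _ _))
    refine ⟨S, hS.trans (erase_subset _ _), hindep, fun a ha haS => ?_⟩
    rcases eq_or_ne a e with rfl | hae
    · by_cases hfS : f ∈ S
      · exact ⟨f, hfS, .inr ⟨hcol, hlt⟩⟩
      have hfa : f ≠ a := by
        rintro rfl
        exact hlt.false
      obtain ⟨g, hg, h | h⟩ := hdom f (mem_erase.2 ⟨hfa, hf⟩) hfS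
      · exact absurd (hmax g (mem_of_mem_erase (hS hg)) h.1.symm) h.2.not_ge
      · exact ⟨g, hg, .inr ⟨hcol.trans h.1, h.2.trans hlt⟩⟩
    · exact hdom a (mem_erase.2 ⟨hae, ha⟩) haS

open Classical in
lemma card_filter_dominates_lt {p : I × J → ℕ} {F : Finset (I × J)} {k : ℕ}
    (hp : IsProperOn LineAdj F p) (hpk : ∀ e ∈ F, p e < k)
    {e : I × J} (he : e ∈ F) : #{f ∈ F | Dominates p f e} < k := by
  have hmaps : ∀ f ∈ ({f ∈ F | Dominates p f e} : Finset (I × J)), p f ∈ (range k).erase (p e) := by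
    intro f hf
    obtain ⟨hf, h⟩ := mem_filter.1 hf
    exact mem_erase.2 ⟨h.elim (fun h => h.2.ne') fun h => h.2.ne, mem_range.2 (hpk f hf)⟩
  refine (card_le_card_of_injOn p hmaps fun f hf g hg hfg => ?_).trans_lt ?_
  · obtain ⟨hf, hfe⟩ := mem_filter.1 hf
    obtain ⟨hg, hge⟩ := mem_filter.1 hg
    refine hp f hf g hg ?_ hfg
    rcases hfe with hfe | hfe <;> rcases hge with hge | hge
    · exact .inl (hfe.1.symm.trans hge.1)
    · omega
    · omega
    · exact .inr (hfe.1.symm.trans hge.1)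
  · have hek := mem_range.2 (hpk e he)
    exact (card_erase_lt_of_mem hek).trans_eq (card_range k)

theorem exists_list_edge_coloring_of_edge_coloring {p : I × J → ℕ} {F : Finset (I × J)} {k : ℕ}
    (hp : IsProperOn LineAdj F p) (hpk : ∀ e ∈ F, p e < k) {L : I × J → Finset ℕ}
    (hL : ∀ e ∈ F, k ≤ #(L e)) :
    ∃ c : I × J → ℕ, (∀ e ∈ F, c e ∈ L e) ∧ IsProperOn LineAdj F c := by
  refine exists_list_coloring_of_isKernel (dom := Dominates p)
    (fun F' hF' => exists_isKernel_dominates (hp.mono hF')) fun e he => ?_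
  exact (card_filter_dominates_lt hp hpk he).trans_le (hL e he)

theorem exists_list_edge_coloring_completeBipartite {k : ℕ} (L : Fin k × Fin k → Finset ℕ)
    (hL : ∀ e, k ≤ #(L e)) :
    ∃ c : Fin k × Fin k → ℕ, (∀ e, c e ∈ L e) ∧ ∀ e f, LineAdj e f → c e = c f → e = f := by
  rcases Nat.eq_zero_or_pos k with rfl | hk
  · exact ⟨fun _ => 0, fun e => e.1.elim0, fun e => e.1.elim0⟩
  have : NeZero k := ⟨hk.ne'⟩
  have hlatin : IsProperOn LineAdj univ fun e : Fin k × Fin k => ((e.1 + e.2 : Fin k) : ℕ) := by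
    intro e _ f _ hef h
    have hsum : e.1 + e.2 = f.1 + f.2 := Fin.ext h
    rcases hef with h | h
    · exact Prod.ext h (add_left_cancel (h ▸ hsum))
    · exact Prod.ext (add_right_cancel (h ▸ hsum)) h
  obtain ⟨c, hc, hproper⟩ := exists_list_edge_coloring_of_edge_coloring hlatin
    (fun _ _ => Fin.is_lt _) fun e _ => hL e
  exact ⟨c, fun e => hc e (mem_univ _), fun e f => hproper e (mem_univ _) f (mem_univ _)⟩

end Galvin

section Blocks

variable {ι : Type*} [LinearOrder ι] {k : ℕ}

theorem exists_list_coloring_injOn_blocks (hk : Even k) (L : Sym2 (ι × Fin k) → Finset ℕ)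
    (hL : ∀ e, k ≤ #(L e)) :
    ∃ c : Sym2 (ι × Fin k) → ℕ, (∀ e, c e ∈ L e) ∧
      ∀ u v w, v.1 = w.1 → c s(u, v) = c s(u, w) → v = w := by
  choose d hdL hd using fun a : ι =>
    exists_list_edge_coloring_completeGraph hk (fun e => L (e.map (a, ·))) fun _ => hL _
  choose g hgL hg using fun a b : ι =>
    exists_list_edge_coloring_completeBipartite (fun e => L s((a, e.1), (b, e.2))) fun _ => hL _
  let color (u v : ι × Fin k) : ℕ :=
    if u.1 = v.1 then d u.1 s(u.2, v.2)
    else if u.1 < v.1 then g u.1 v.1 (u.2, v.2) else g v.1 u.1 (v.2, u.2)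
  have hcomm (u v : ι × Fin k) : color u v = color v u := by
    rcases lt_trichotomy u.1 v.1 with h | h | h
    · simp only [color, h, h.ne, h.ne', h.not_gt, if_true, if_false]
    · simp only [color, h, if_true, Sym2.eq_swap]
    · simp only [color, h, h.ne, h.ne', h.not_gt, if_true, if_false]
  refine ⟨Sym2.lift ⟨color, hcomm⟩, fun e => ?_, fun u v w hvw h => ?_⟩
  · induction e with | _ u v
    rw [Sym2.lift_mk]
    dsimp only [color]
    split_ifs with h
    · have hv : (u.1, v.2) = v := Prod.ext h rfl
      simpa only [Sym2.map_mk, Prod.mk.eta, hv] using hdL u.1 s(u.2, v.2)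
    · exact hgL u.1 v.1 (u.2, v.2)
    · rw [Sym2.eq_swap]
      exact hgL v.1 u.1 (v.2, u.2)
  · refine Prod.ext hvw ?_
    simp only [Sym2.lift_mk, color, hvw] at h
    split_ifs at h
    · exact hd _ _ h
    · exact (Prod.ext_iff.1 (hg _ _ (u.2, v.2) (u.2, w.2) (.inl rfl) h)).2
    · exact (Prod.ext_iff.1 (hg _ _ (v.2, u.2) (w.2, u.2) (.inr rfl) h)).1

theorem exists_list_coloring_injOn_blocks_of_embedding {V : Type*} (hk : Even k)
    (g : V ↪ ι × Fin k) (L : Sym2 V → Finset ℕ) (hL : ∀ e, ¬ e.IsDiag → k ≤ #(L e)) :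
    ∃ c : Sym2 V → ℕ, (∀ e, ¬ e.IsDiag → c e ∈ L e) ∧
      ∀ u v w, (g v).1 = (g w).1 → c s(u, v) = c s(u, w) → v = w := by
  classical
  let L' : Sym2 (ι × Fin k) → Finset ℕ :=
    Function.extend (Sym2.map g) (fun e => if e.IsDiag then range k else L e) fun _ => range k
  have hL'_map (e : Sym2 V) : L' (e.map g) = if e.IsDiag then range k else L e :=
    (Sym2.map.injective g.injective).extend_apply _ _ e
  have hL' (e : Sym2 (ι × Fin k)) : k ≤ #(L' e) := by
    by_cases he : ∃ e₀, Sym2.map g e₀ = e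
    · obtain ⟨e₀, rfl⟩ := he
      rw [hL'_map]
      split_ifs with he₀
      · exact (card_range k).ge
      · exact hL e₀ he₀
    · rw [show L' e = range k from Function.extend_apply' _ _ _ he, card_range]
  obtain ⟨c, hc, hinj⟩ := exists_list_coloring_injOn_blocks hk L' hL'
  exact ⟨fun e => c (e.map g), fun e he => by simpa only [hL'_map, he, if_false] using hc (e.map g),
    fun u v w hvw h => g.injective (hinj (g u) (g v) (g w) hvw h)⟩

end Blocks

section Star

variable {r k n : ℕ}

lemma starGraph_adj_zero_succ (i : Fin r) : (starGraph r).Adj 0 i.succ := by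
  simp [starGraph, SimpleGraph.fromRel_adj, (Fin.succ_ne_zero i).symm]

lemma not_hasMonoCopy_starGraph {ι β : Type*} [Fintype ι] (hι : Fintype.card ι < r)
    (b : Fin n → ι) (c : Sym2 (Fin n) → β)
    (hc : ∀ u v w, b v = b w → c s(u, v) = c s(u, w) → v = w) :
    ¬ HasMonoCopy (starGraph r) c := by
  rintro ⟨f, x, hf, hx⟩
  obtain ⟨i, j, hij, hb⟩ :=
    Fintype.exists_ne_map_eq_of_card_lt (fun i : Fin r => b (f i.succ)) (by simpa using hι)
  refine hij (Fin.succ_injective _ (hf (hc (f 0) _ _ hb ?_)))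
  rw [hx _ _ (starGraph_adj_zero_succ i), hx _ _ (starGraph_adj_zero_succ j)]

theorem exists_list_coloring_not_hasMonoCopy_starGraph (hr : 0 < r) (hk : Even k)
    (hn : n ≤ (r - 1) * k) (L : Sym2 (Fin n) → Finset ℕ) (hL : ∀ e, ¬ e.IsDiag → k ≤ #(L e)) :
    ∃ c : Sym2 (Fin n) → ℕ, (∀ e, ¬ e.IsDiag → c e ∈ L e) ∧ ¬ HasMonoCopy (starGraph r) c := by
  let g : Fin n ↪ Fin (r - 1) × Fin k :=
    (Fin.castLEEmb hn).trans finProdFinEquiv.symm.toEmbedding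
  obtain ⟨c, hc, hinj⟩ := exists_list_coloring_injOn_blocks_of_embedding hk g L hL
  exact ⟨c, hc, not_hasMonoCopy_starGraph (by simpa using hr) (fun v => (g v).1) c hinj⟩

open SimpleGraph (fromEdgeSet fromRel_adj)

lemma hasMonoCopy_starGraph_of_le_degree {β : Type*} {c : Sym2 (Fin n) → β} {v : Fin n} {x : β}
    [DecidableRel (fromEdgeSet (c ⁻¹' {x})).Adj]
    (h : r ≤ (fromEdgeSet (c ⁻¹' {x})).degree v) : HasMonoCopy (starGraph r) c := by
  obtain ⟨s, hs, hcard⟩ := exists_subset_card_eq h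
  let leaf := s.orderEmbOfFin hcard
  have hleaf (i : Fin r) : c s(v, leaf i) = x ∧ v ≠ leaf i := by
    simpa using hs (s.orderEmbOfFin_mem hcard i)
  refine ⟨Fin.cons v leaf, x, ?_, fun a b hab => ?_⟩
  · rw [Fin.cons_injective_iff]
    exact ⟨fun ⟨i, hi⟩ => (hleaf i).2 hi.symm, leaf.injective⟩
  · obtain ⟨hne, rfl | rfl⟩ := (fromRel_adj _ _ _).1 hab
    · obtain ⟨i, rfl⟩ := Fin.exists_succ_eq.2 hne.symm
      simpa using (hleaf i).1
    · obtain ⟨i, rfl⟩ := Fin.exists_succ_eq.2 hne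
      rw [Sym2.eq_swap]
      simpa using (hleaf i).1

lemma sum_degree_fromEdgeSet_preimage {V β : Type*} [Fintype V] [Fintype β] (c : Sym2 V → β)
    [∀ x, DecidableRel (fromEdgeSet (c ⁻¹' {x})).Adj] (v : V) :
    ∑ x, (fromEdgeSet (c ⁻¹' {x})).degree v = Fintype.card V - 1 := by
  classical
  rw [← card_univ, ← card_erase_of_mem (mem_univ v),
    card_eq_sum_card_fiberwise (f := fun w => c s(v, w)) (t := univ) fun _ _ => mem_univ _]
  refine sum_congr rfl fun x _ => congrArg card ?_
  ext w
  simp [eq_comm, and_comm]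

lemma isRegularOfDegree_of_not_hasMonoCopy_starGraph (hr : 0 < r)
    {c : Sym2 (Fin ((r - 1) * k + 1)) → Fin k}
    [∀ x, DecidableRel (fromEdgeSet (c ⁻¹' {x})).Adj] (hc : ¬ HasMonoCopy (starGraph r) c)
    (x : Fin k) :
    (fromEdgeSet (c ⁻¹' {x})).IsRegularOfDegree (r - 1) := by
  intro v
  have hle (y : Fin k) : (fromEdgeSet (c ⁻¹' {y})).degree v ≤ r - 1 := by
    by_contra h
    exact hc (hasMonoCopy_starGraph_of_le_degree (v := v) (x := y) (by omega))
  have hsum : ∑ y, (fromEdgeSet (c ⁻¹' {y})).degree v = ∑ _y : Fin k, (r - 1) := by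
    rw [sum_degree_fromEdgeSet_preimage, sum_const, card_univ, Fintype.card_fin, Fintype.card_fin,
      smul_eq_mul, Nat.add_sub_cancel, mul_comm]
  exact (sum_eq_sum_iff_of_le fun y _ => hle y).1 hsum x (mem_univ x)

lemma even_card_mul_of_isRegularOfDegree {V : Type*} [Fintype V] {G : SimpleGraph V}
    [DecidableRel G.Adj] {d : ℕ} (hG : G.IsRegularOfDegree d) : Even (Fintype.card V * d) := by
  have hsum := G.sum_degrees_eq_twice_card_edges
  simp only [hG.degree_eq, sum_const, card_univ, smul_eq_mul] at hsum
  exact hsum ▸ even_two_mul _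

theorem hasMonoCopy_starGraph_of_even (hr : 0 < r) (hk : 0 < k) (her : Even r) (hek : Even k)
    (c : Sym2 (Fin ((r - 1) * k + 1)) → Fin k) : HasMonoCopy (starGraph r) c := by
  classical
  by_contra hc
  have heven := even_card_mul_of_isRegularOfDegree
    (isRegularOfDegree_of_not_hasMonoCopy_starGraph hr hc ⟨0, hk⟩)
  rw [Fintype.card_fin] at heven
  have hodd : Odd (((r - 1) * k + 1) * (r - 1)) :=
    (hek.mul_left _).add_one.mul (Nat.Even.sub_odd hr her odd_one)
  exact Nat.not_odd_iff_even.2 heven hodd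

end Star

lemma hasMonoCopy_of_forall_fin {α : Type*} {G : SimpleGraph α} {n k : ℕ} (hk : 0 < k)
    (h : ∀ c : Sym2 (Fin n) → Fin k, HasMonoCopy G c) {c : Sym2 (Fin n) → ℕ}
    (hc : ∀ e, ¬ e.IsDiag → c e ∈ range k) : HasMonoCopy G c := by
  obtain ⟨f, x, hf, hx⟩ := h fun e => ⟨c e % k, Nat.mod_lt _ hk⟩
  refine ⟨f, x, hf, fun a b hab => ?_⟩
  have hlt := mem_range.1 (hc s(f a, f b) (by simpa using hf.ne hab.ne))
  rw [← hx a b hab]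
  exact (Nat.mod_eq_of_lt hlt).symm

lemma listRamsey_le_ramsey {α : Type*} {G : SimpleGraph α} {n k : ℕ} (hk : 0 < k)
    (h : ∀ c : Sym2 (Fin n) → Fin k, HasMonoCopy G c) : listRamsey G k ≤ ramsey G k := by
  have hramsey : ∀ c : Sym2 (Fin (ramsey G k)) → Fin k, HasMonoCopy G c :=
    Nat.sInf_mem (s := {n | ∀ c : Sym2 (Fin n) → Fin k, HasMonoCopy G c}) ⟨n, h⟩
  exact Nat.sInf_le ⟨fun _ => range k, fun _ _ => card_range k, fun _ hc =>
    hasMonoCopy_of_forall_fin hk hramsey hc⟩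

lemma lt_listRamsey {α : Type*} {G : SimpleGraph α} {n k : ℕ} (hk : 0 < k)
    (h : ∀ c : Sym2 (Fin n) → Fin k, HasMonoCopy G c) {N : ℕ}
    (hN : ∀ n ≤ N, ∀ L : Sym2 (Fin n) → Finset ℕ, (∀ e, ¬ e.IsDiag → #(L e) = k) →
      ∃ c : Sym2 (Fin n) → ℕ, (∀ e, ¬ e.IsDiag → c e ∈ L e) ∧ ¬ HasMonoCopy G c) :
    N < listRamsey G k := by
  rw [Nat.lt_iff_add_one_le, listRamsey]
  refine le_csInf ⟨n, fun _ => range k, fun _ _ => card_range k, fun _ hc =>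
    hasMonoCopy_of_forall_fin hk h hc⟩ ?_
  rintro n ⟨L, hL, hmono⟩
  by_contra! hn
  obtain ⟨c, hc, hno⟩ := hN n (Nat.le_of_lt_succ hn) L hL
  exact hno (hmono c hc)

theorem list_ramsey_star_even (r k : ℕ) (hr : 0 < r) (hk : 0 < k)
    (her : Even r) (hek : Even k) :
    listRamsey (starGraph r) k = (r - 1) * k + 1 ∧
    ramsey (starGraph r) k = (r - 1) * k + 1 := by
  have hmono := hasMonoCopy_starGraph_of_even hr hk her hek
  have hramsey : ramsey (starGraph r) k ≤ (r - 1) * k + 1 := Nat.sInf_le hmono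
  have hle : listRamsey (starGraph r) k ≤ ramsey (starGraph r) k := listRamsey_le_ramsey hk hmono
  have hlist : (r - 1) * k < listRamsey (starGraph r) k :=
    lt_listRamsey hk hmono fun _ hn L hL =>
      exists_list_coloring_not_hasMonoCopy_starGraph hr hek hn L fun e he => (hL e he).ge
  omega
end

section
/- For every positive integer k there exists an integer w(k) such that for every integer r ≥ w(k) with r and k not both even, R_ℓ(K_{1,r}, k) = (r-1)k + 2 = R(K_{1,r}, k). -/
/-! If all lists are equal, a colouring of `K_n` with `n = (r - 1) * k + 1` and no monochromatic
`K_{1,r}` has exactly `r - 1` edges of each colour at every vertex. For arbitrary lists, one splits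
`K_n` into regular pieces. By Petersen, a `2ks`-regular graph has an orientation with all in- and
outdegrees `ks`. Its arcs form a bipartite graph between two copies of the vertex set, which is
`ks`-edge-colourable by König, hence choosable by Galvin from the lists `L e × {0, …, s - 1}`, and
forgetting the second coordinate leaves each colour at most `s` times on the arcs out of a vertex
and at most `s` times on the arcs into it. This settles odd `r`, where `K_n` is `2ks`-regular with
`r = 2s + 1`. If `r = 2s + 2`, then `n` is even, and the edges `xy` for which `x + y` is congruent
modulo `n` to one of `1, 3, …, 2k - 1` form a bipartite `k`-regular graph. By Galvin it is
`k`-edge-choosable, and its complement is `2ks`-regular. -/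

open Finset

section KernelMethod

/-- A kernel of the digraph `D` restricted to `S`: an independent set `M ⊆ S` such that every other
element of `S` has an arc into `M`. -/
structure IsKernel_s2 {E : Type*} (D : E → E → Prop) (S M : Finset E) : Prop where
  subset : M ⊆ S
  independent : ∀ p ∈ M, ∀ q ∈ M, ¬ D p q
  absorbing : ∀ p ∈ S, p ∉ M → ∃ q ∈ M, D p q

/-- Give one colour to a kernel of the set of elements that have it in their lists, and recurse. -/
theorem exists_list_coloring_of_forall_exists_isKernel {E C : Type*} [Nonempty C]
    (D : E → E → Prop) [DecidableRel D] (hD : ∀ T : Finset E, ∃ M, IsKernel_s2 D T M)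
    (S : Finset E) (L : E → Finset C) (hL : ∀ p ∈ S, #{q ∈ S | D p q} < #(L p)) :
    ∃ c : E → C, (∀ p ∈ S, c p ∈ L p) ∧ ∀ p ∈ S, ∀ q ∈ S, D p q → c p ≠ c q := by
  classical
  induction S using Finset.strongInduction generalizing L with
  | H S ih =>
    rcases S.eq_empty_or_nonempty with rfl | ⟨e, he⟩
    · exact ⟨fun _ => Classical.arbitrary C, by simp, by simp⟩
    obtain ⟨x, hx⟩ : (L e).Nonempty := card_pos.1 (Nat.zero_lt_of_lt (hL e he))
    obtain ⟨M, hM⟩ := hD {p ∈ S | x ∈ L p}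
    have hMS : M ⊆ S := hM.subset.trans (filter_subset _ _)
    have hMx : ∀ p ∈ M, x ∈ L p := fun p hp => (mem_filter.1 (hM.subset hp)).2
    have hM_nonempty : M.Nonempty := by
      by_contra! h
      obtain ⟨q, hq, -⟩ := hM.absorbing e (mem_filter.2 ⟨he, hx⟩) (by simp [h])
      simp [h] at hq
    have hlists : ∀ p ∈ S \ M, #{q ∈ S \ M | D p q} < #((L p).erase x) := by
      intro p hp
      obtain ⟨hpS, hpM⟩ := mem_sdiff.1 hp
      have hsub : {q ∈ S \ M | D p q} ⊆ {q ∈ S | D p q} := filter_subset_filter _ sdiff_subset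
      by_cases hxp : x ∈ L p
      · obtain ⟨q, hqM, hpq⟩ := hM.absorbing p (mem_filter.2 ⟨hpS, hxp⟩) hpM
        have hlt : #{q ∈ S \ M | D p q} < #{q ∈ S | D p q} :=
          card_lt_card (ssubset_iff_of_subset hsub |>.2
            ⟨q, mem_filter.2 ⟨hMS hqM, hpq⟩, by simp [hqM]⟩)
        have := hL p hpS
        rw [card_erase_of_mem hxp]
        omega
      · rw [erase_eq_of_notMem hxp]
        exact (card_le_card hsub).trans_lt (hL p hpS)
    obtain ⟨c, hc, hproper⟩ := ih (S \ M) (sdiff_ssubset hMS hM_nonempty) _ hlists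
    have hcM : ∀ p ∈ S, p ∉ M → c p ∈ (L p).erase x := fun p hp h => hc p (mem_sdiff.2 ⟨hp, h⟩)
    refine ⟨fun p => if p ∈ M then x else c p, fun p hp => ?_, fun p hp q hq hpq => ?_⟩
    · dsimp only
      split_ifs with hpM
      · exact hMx p hpM
      · exact mem_of_mem_erase (hcM p hp hpM)
    · dsimp only
      split_ifs with hpM hqM hqM
      · exact absurd hpq (hM.independent p hpM q hqM)
      · exact (ne_of_mem_erase (hcM q hq hqM)).symm
      · exact ne_of_mem_erase (hcM p hp hpM)
      · exact hproper p (mem_sdiff.2 ⟨hp, hpM⟩) q (mem_sdiff.2 ⟨hq, hqM⟩) hpq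

end KernelMethod

section Galvin

variable {A B C γ : Type*}

/-- `f` is a proper edge colouring of the bipartite graph with edge set `S ⊆ A × B`. -/
def IsProperEdgeColoring (S : Finset (A × B)) (f : A × B → C) : Prop :=
  ∀ p ∈ S, ∀ q ∈ S, p.1 = q.1 ∨ p.2 = q.2 → f p = f q → p = q

/-- Galvin's orientation of the line graph of a bipartite graph: arcs go upwards in `f` between
edges with a common end in `A`, and downwards between edges with a common end in `B`. -/
def GalvinArc [LT γ] (f : A × B → γ) (p q : A × B) : Prop :=
  p.1 = q.1 ∧ f p < f q ∨ p.2 = q.2 ∧ f q < f p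

theorem galvinArc_or_galvinArc_of_ne [LinearOrder γ] {f : A × B → γ} {p q : A × B}
    (hpq : p.1 = q.1 ∨ p.2 = q.2) (hne : f p ≠ f q) : GalvinArc f p q ∨ GalvinArc f q p := by
  rcases hpq with h | h <;> rcases hne.lt_or_gt with hlt | hlt
  · exact .inl (.inl ⟨h, hlt⟩)
  · exact .inr (.inl ⟨h.symm, hlt⟩)
  · exact .inr (.inr ⟨h.symm, hlt⟩)
  · exact .inl (.inr ⟨h, hlt⟩)

/-- The kernel is a stable matching, found by deleting pairs that lose against the favourite of
another row until the favourites of the rows are compatible. -/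
theorem exists_isKernel_galvinArc [LinearOrder γ] (f : A × B → γ) (S : Finset (A × B)) :
    ∃ M, IsKernel_s2 (GalvinArc f) S M := by
  classical
  induction S using Finset.strongInduction with
  | H S ih =>
    let IsRowMax (p : A × B) : Prop := ∀ e ∈ S, e.1 = p.1 → f e ≤ f p
    by_cases hconflict : ∃ p ∈ S, ∃ q ∈ S, IsRowMax p ∧ IsRowMax q ∧ q.2 = p.2 ∧ f p < f q
    · obtain ⟨p, hp, q, hq, hpmax, -, hqp, hlt⟩ := hconflict
      obtain ⟨M, hM⟩ := ih (S.erase q) (erase_ssubset hq)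
      refine ⟨M, hM.subset.trans (erase_subset _ _), hM.independent, fun e he heM => ?_⟩
      obtain rfl | heq := eq_or_ne e q
      · by_cases hpM : p ∈ M
        · exact ⟨p, hpM, .inr ⟨hqp, hlt⟩⟩
        have hpe : p ≠ e := fun h => hlt.ne (congrArg f h)
        obtain ⟨g, hg, ⟨hpg, h⟩ | ⟨hpg, h⟩⟩ := hM.absorbing p (mem_erase.2 ⟨hpe, hp⟩) hpM
        · exact absurd (hpmax g (mem_of_mem_erase (hM.subset hg)) hpg.symm) h.not_ge
        · exact ⟨g, hg, .inr ⟨hqp.trans hpg, h.trans hlt⟩⟩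
      · exact hM.absorbing e (mem_erase.2 ⟨heq, he⟩) heM
    · refine ⟨S.filter IsRowMax, filter_subset _ _, fun p hp q hq => ?_, fun p hp hpM => ?_⟩
      · obtain ⟨hpS, hpmax⟩ := mem_filter.1 hp
        obtain ⟨hqS, hqmax⟩ := mem_filter.1 hq
        rintro (⟨hpq, h⟩ | ⟨hpq, h⟩)
        · exact (hpmax q hqS hpq.symm).not_gt h
        · exact hconflict ⟨q, hqS, p, hpS, hqmax, hpmax, hpq, h⟩
      · obtain ⟨e, he, hep, hlt⟩ : ∃ e ∈ S, e.1 = p.1 ∧ f p < f e := by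
          simpa [IsRowMax, hp] using hpM
        obtain ⟨q, hq, hmax⟩ := exists_max_image {e ∈ S | e.1 = p.1} f
          ⟨e, mem_filter.2 ⟨he, hep⟩⟩
        obtain ⟨hqS, hqp⟩ := mem_filter.1 hq
        have hqmax : IsRowMax q := fun d hd h => hmax d (mem_filter.2 ⟨hd, h.trans hqp⟩)
        exact ⟨q, mem_filter.2 ⟨hqS, hqmax⟩,
          .inl ⟨hqp.symm, hlt.trans_le (hmax e (mem_filter.2 ⟨he, hep⟩))⟩⟩

theorem IsProperEdgeColoring.card_galvinArc_lt [LinearOrder γ] {f : A × B → γ}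
    [DecidableRel (GalvinArc f)] {S : Finset (A × B)} (hf : IsProperEdgeColoring S f)
    {T : Finset γ} (hT : ∀ p ∈ S, f p ∈ T) {p : A × B} (hp : p ∈ S) :
    #{q ∈ S | GalvinArc f p q} < #T := by
  refine lt_of_le_of_lt ?_ (card_erase_lt_of_mem (hT p hp))
  refine card_le_card_of_injOn f (fun q hq => ?_) fun a ha b hb hab => ?_
  · obtain ⟨hqS, hpq⟩ := mem_filter.1 hq
    exact mem_erase.2 ⟨hpq.elim (fun h => h.2.ne') (fun h => h.2.ne), hT q hqS⟩
  · obtain ⟨haS, ha⟩ := mem_filter.1 ha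
    obtain ⟨hbS, hb⟩ := mem_filter.1 hb
    refine hf a haS b hbS ?_ hab
    rcases ha with ⟨ha, hpa⟩ | ⟨ha, hpa⟩ <;> rcases hb with ⟨hb, hpb⟩ | ⟨hb, hpb⟩
    · exact .inl (ha.symm.trans hb)
    · exact absurd (hab ▸ hpa) hpb.not_gt
    · exact absurd (hab ▸ hpa) hpb.not_gt
    · exact .inr (ha.symm.trans hb)

theorem IsProperEdgeColoring.exists_list_coloring [Nonempty C] [LinearOrder γ] {f : A × B → γ}
    {S : Finset (A × B)} (hf : IsProperEdgeColoring S f) {T : Finset γ} (hT : ∀ p ∈ S, f p ∈ T)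
    (L : A × B → Finset C) (hL : ∀ p ∈ S, #T ≤ #(L p)) :
    ∃ c : A × B → C, (∀ p ∈ S, c p ∈ L p) ∧ IsProperEdgeColoring S c := by
  classical
  obtain ⟨c, hc, hproper⟩ := exists_list_coloring_of_forall_exists_isKernel (GalvinArc f)
    (exists_isKernel_galvinArc f) S L fun p hp => (hf.card_galvinArc_lt hT hp).trans_le (hL p hp)
  refine ⟨c, hc, fun p hp q hq hpq hcpq => ?_⟩
  refine hf p hp q hq hpq (by_contra fun hne => ?_)
  rcases galvinArc_or_galvinArc_of_ne hpq hne with h | h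
  · exact hproper p hp q hq h hcpq
  · exact hproper q hq p hp h hcpq.symm

/-- Apply Galvin's theorem to the lists `L p × {0, …, s - 1}` and forget the second coordinate. -/
theorem IsProperEdgeColoring.exists_list_coloring_ncard_le [Nonempty C] [LinearOrder γ]
    {f : A × B → γ} {S : Finset (A × B)} (hf : IsProperEdgeColoring S f) {T : Finset γ}
    (hT : ∀ p ∈ S, f p ∈ T) (s : ℕ) (L : A × B → Finset C) (hL : ∀ p ∈ S, #T ≤ #(L p) * s) :
    ∃ c : A × B → C, (∀ p ∈ S, c p ∈ L p) ∧
      (∀ a x, {b | (a, b) ∈ S ∧ c (a, b) = x}.ncard ≤ s) ∧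
      ∀ b x, {a | (a, b) ∈ S ∧ c (a, b) = x}.ncard ≤ s := by
  obtain ⟨c, hc, hproper⟩ := hf.exists_list_coloring hT (fun p => L p ×ˢ range s)
    fun p hp => by simpa only [card_product, card_range] using hL p hp
  have hslot : ∀ p ∈ S, (c p).2 ∈ (range s : Set ℕ) := fun p hp => (mem_product.1 (hc p hp)).2
  have hrange : (range s : Set ℕ).ncard = s := by rw [Set.ncard_coe_finset, card_range]
  refine ⟨fun p => (c p).1, fun p hp => (mem_product.1 (hc p hp)).1, fun a x => ?_, fun b x => ?_⟩
  · rw [← hrange]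
    refine Set.ncard_le_ncard_of_injOn (fun b => (c (a, b)).2) (fun b hb => hslot _ hb.1) ?_
    intro b hb b' hb' h
    exact congrArg Prod.snd
      (hproper _ hb.1 _ hb'.1 (.inl rfl) (Prod.ext (hb.2.trans hb'.2.symm) h))
  · rw [← hrange]
    refine Set.ncard_le_ncard_of_injOn (fun a => (c (a, b)).2) (fun a ha => hslot _ ha.1) ?_
    intro a ha a' ha' h
    exact congrArg Prod.fst
      (hproper _ ha.1 _ ha'.1 (.inr rfl) (Prod.ext (ha.2.trans ha'.2.symm) h))

end Galvin

section Konig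

variable {A B : Type*} [Fintype A] [Fintype B]

theorem exists_injective_of_le_card_of_card_le (r : A → B → Prop) [DecidableRel r] {d : ℕ}
    (hd : 0 < d) (hA : ∀ a, d ≤ #{b | r a b}) (hB : ∀ b, #{a | r a b} ≤ d) :
    ∃ f : A → B, Function.Injective f ∧ ∀ a, r a (f a) := by
  refine (Fintype.all_card_le_filter_rel_iff_exists_injective r).1 fun s => ?_
  refine Nat.le_of_mul_le_mul_right (card_mul_le_card_mul r (fun a ha => ?_) fun b _ => ?_) hd
  · refine (hA a).trans (card_le_card fun b hb => ?_)
    have hab : r a b := (mem_filter.1 hb).2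
    exact (mem_bipartiteAbove r).2 ⟨mem_filter.2 ⟨mem_univ b, a, ha, hab⟩, hab⟩
  · exact (card_le_card (filter_subset_filter _ (subset_univ s))).trans (hB b)

variable [DecidableEq A] [DecidableEq B]

theorem exists_equiv_of_regular {S : Finset (A × B)} {d : ℕ} (hd : 0 < d)
    (hA : ∀ a, #{b | (a, b) ∈ S} = d) (hB : ∀ b, #{a | (a, b) ∈ S} = d) :
    ∃ g : A ≃ B, ∀ a, (a, g a) ∈ S := by
  obtain ⟨g, hg, hgS⟩ := exists_injective_of_le_card_of_card_le (fun a b => (a, b) ∈ S) hd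
    (fun a => (hA a).ge) (fun b => (hB b).le)
  have hcard : Fintype.card A = Fintype.card B := Nat.eq_of_mul_eq_mul_right hd <|
    card_mul_eq_card_mul (fun a b => (a, b) ∈ S) (fun a _ => hA a) (fun b _ => hB b)
  exact ⟨.ofBijective g ((Fintype.bijective_iff_injective_and_card g).2 ⟨hg, hcard⟩), hgS⟩

theorem exists_isProperEdgeColoring_of_regular {S : Finset (A × B)} {d : ℕ}
    (hA : ∀ a, #{b | (a, b) ∈ S} = d) (hB : ∀ b, #{a | (a, b) ∈ S} = d) :
    ∃ f : A × B → ℕ, IsProperEdgeColoring S f ∧ ∀ p ∈ S, f p ∈ range d := by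
  induction d generalizing S with
  | zero =>
    have hS : ∀ p, p ∉ S := fun p hp =>
      filter_eq_empty_iff.1 (card_eq_zero.1 (hA p.1)) (mem_univ p.2) hp
    exact ⟨fun _ => 0, fun p hp => absurd hp (hS p), fun p hp => absurd hp (hS p)⟩
  | succ d ih =>
    obtain ⟨g, hg⟩ := exists_equiv_of_regular d.succ_pos hA hB
    have hA' : ∀ a, #{b | (a, b) ∈ S.filter fun p => p.2 ≠ g p.1} = d := fun a => by
      have : ({b | (a, b) ∈ S.filter fun p => p.2 ≠ g p.1} : Finset B) =
          ({b | (a, b) ∈ S} : Finset B).erase (g a) := by ext; simp [and_comm]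
      rw [this, card_erase_of_mem (by simpa using hg a), hA, Nat.add_sub_cancel]
    have hB' : ∀ b, #{a | (a, b) ∈ S.filter fun p => p.2 ≠ g p.1} = d := fun b => by
      have : ({a | (a, b) ∈ S.filter fun p => p.2 ≠ g p.1} : Finset A) =
          ({a | (a, b) ∈ S} : Finset A).erase (g.symm b) := by
        ext; simp [and_comm, Equiv.eq_symm_apply, eq_comm]
      rw [this, card_erase_of_mem (by simpa using hg (g.symm b)), hB, Nat.add_sub_cancel]
    obtain ⟨f, hf, hfd⟩ := ih hA' hB'
    have hlt : ∀ p ∈ S, p.2 ≠ g p.1 → f p < d := fun p hp h =>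
      mem_range.1 (hfd p (mem_filter.2 ⟨hp, h⟩))
    refine ⟨fun p => if p.2 = g p.1 then d else f p, fun p hp q hq hpq => ?_, fun p hp => ?_⟩
    · dsimp only
      split_ifs with hpg hqg hqg
      · intro _
        have h1 : p.1 = q.1 := hpq.elim id fun h => g.injective (by rw [← hpg, ← hqg, h])
        exact Prod.ext h1 (by rw [hpg, hqg, h1])
      · exact fun h => absurd h (hlt q hq hqg).ne'
      · exact fun h => absurd h (hlt p hp hpg).ne
      · exact hf p (mem_filter.2 ⟨hp, hpg⟩) q (mem_filter.2 ⟨hq, hqg⟩) hpq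
    · dsimp only
      split_ifs with hpg
      · exact self_mem_range_succ d
      · exact mem_range.2 ((hlt p hp hpg).trans d.lt_succ_self)

end Konig

section Orientation

variable {V : Type*}

/-- The set of arcs `S` contains exactly one of `(u, v)` and `(v, u)` for every edge `uv` of `G`,
and nothing else. -/
structure IsOrientation (S : Finset (V × V)) (G : SimpleGraph V) : Prop where
  asymm : ∀ {u v}, (u, v) ∈ S → (v, u) ∉ S
  adj_iff : ∀ {u v}, G.Adj u v ↔ (u, v) ∈ S ∨ (v, u) ∈ S

theorem IsOrientation.injective_mk {S : Finset (V × V)} {G : SimpleGraph V}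
    (hS : IsOrientation S G) : Function.Injective fun p : S => s(p.1.1, p.1.2) := by
  rintro ⟨⟨u, v⟩, hp⟩ ⟨⟨u', v'⟩, hq⟩ h
  rcases Sym2.eq_iff.1 h with ⟨rfl, rfl⟩ | ⟨rfl, rfl⟩
  · rfl
  · exact absurd hp (hS.asymm hq)

theorem IsOrientation.exists_sym2_extension {S : Finset (V × V)} {G : SimpleGraph V}
    (hS : IsOrientation S G) {C : Type*} [Nonempty C] (c : V × V → C) :
    ∃ c' : Sym2 V → C, ∀ {u v}, (u, v) ∈ S → c' s(u, v) = c (u, v) :=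
  ⟨Function.extend (fun p : S => s(p.1.1, p.1.2)) (fun p => c p) fun _ => Classical.arbitrary C,
    fun h => hS.injective_mk.extend_apply _ _ ⟨_, h⟩⟩

variable [Fintype V]

/-- Each vertex offers `t` slots, and every edge has its two ends' `2 * t` slots to choose from. -/
theorem exists_injective_endpoint (G : SimpleGraph V) [DecidableRel G.Adj] {t : ℕ}
    (hG : ∀ v, G.degree v ≤ 2 * t) :
    ∃ g : G.edgeSet → V × Fin t, Function.Injective g ∧ ∀ e, (g e).1 ∈ e.1 := by
  classical
  rcases t.eq_zero_or_pos with rfl | ht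
  · have hbot : G.edgeSet = ∅ := by
      refine Set.eq_empty_iff_forall_notMem.2 fun e he => ?_
      induction e with | _ u v =>
      exact ((G.degree_pos_iff_exists_adj u).2 ⟨v, he⟩).ne' (Nat.le_zero.1 (hG u))
    have : IsEmpty G.edgeSet := Set.isEmpty_coe_sort.2 hbot
    exact ⟨isEmptyElim, Function.injective_of_subsingleton _, isEmptyElim⟩
  refine exists_injective_of_le_card_of_card_le
    (fun (e : G.edgeSet) (p : V × Fin t) => p.1 ∈ e.1) (d := 2 * t) (by positivity) ?_ ?_
  · rintro ⟨e, he⟩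
    induction e with | _ u v =>
    have hends : ({p | p.1 ∈ s(u, v)} : Finset (V × Fin t)) = {u, v} ×ˢ univ := by ext; simp
    rw [hends, card_product, card_pair (G.ne_of_adj he), card_fin]
  · rintro ⟨v, i⟩
    refine le_trans ?_ (hG v)
    rw [← G.card_incidenceFinset_eq_degree]
    refine card_le_card_of_injOn Subtype.val (fun e he => ?_) Subtype.val_injective.injOn
    simpa [SimpleGraph.incidenceSet] using he

variable [DecidableEq V]

theorem IsOrientation.outdegree_add_indegree {S : Finset (V × V)} {G : SimpleGraph V}
    [DecidableRel G.Adj] (hS : IsOrientation S G) (v : V) :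
    #{u | (v, u) ∈ S} + #{u | (u, v) ∈ S} = G.degree v := by
  rw [← G.card_neighborFinset_eq_degree, ← card_union_of_disjoint]
  · congr 1
    ext u
    simp [hS.adj_iff]
  · exact disjoint_filter.2 fun u _ => hS.asymm

theorem exists_isOrientation_outdegree_le (G : SimpleGraph V) [DecidableRel G.Adj] {t : ℕ}
    (hG : ∀ v, G.degree v ≤ 2 * t) :
    ∃ S : Finset (V × V), IsOrientation S G ∧ ∀ v, #{u | (v, u) ∈ S} ≤ t := by
  obtain ⟨g, hg_inj, hg⟩ := exists_injective_endpoint G hG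
  let S : Finset (V × V) := {p | ∃ h : G.Adj p.1 p.2, (g ⟨s(p.1, p.2), h⟩).1 = p.1}
  have mem_S : ∀ {u v}, (u, v) ∈ S ↔ ∃ h : G.Adj u v, (g ⟨s(u, v), h⟩).1 = u := by simp [S]
  have edge_swap : ∀ {u v} (h : G.Adj u v), (⟨s(u, v), h⟩ : G.edgeSet) = ⟨s(v, u), h.symm⟩ :=
    fun _ => Subtype.ext Sym2.eq_swap
  refine ⟨S, ⟨fun {u v} huv hvu => ?_, fun {u v} => ⟨fun h => ?_, ?_⟩⟩, fun v => ?_⟩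
  · obtain ⟨h, hu⟩ := mem_S.1 huv
    obtain ⟨h', hv⟩ := mem_S.1 hvu
    rw [edge_swap h', hu] at hv
    exact h.ne hv
  · rcases Sym2.mem_iff.1 (hg ⟨s(u, v), h⟩) with hu | hv
    · exact .inl (mem_S.2 ⟨h, hu⟩)
    · exact .inr (mem_S.2 ⟨h.symm, edge_swap h ▸ hv⟩)
  · rintro (h | h)
    · exact (mem_S.1 h).1
    · exact (mem_S.1 h).1.symm
  · rw [← Fintype.card_subtype, ← Fintype.card_fin t]
    refine Fintype.card_le_of_injective (fun u : {u // (v, u) ∈ S} =>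
      (g ⟨s(v, u), (mem_S.1 u.2).1⟩).2) fun a b hab => ?_
    obtain ⟨_, ha⟩ := mem_S.1 a.2
    obtain ⟨_, hb⟩ := mem_S.1 b.2
    have hedge := congrArg Subtype.val (hg_inj (Prod.ext (ha.trans hb.symm) hab))
    exact Subtype.ext (Sym2.congr_right.1 hedge)

theorem exists_balanced_isOrientation (G : SimpleGraph V) [DecidableRel G.Adj] {t : ℕ}
    (hG : G.IsRegularOfDegree (2 * t)) :
    ∃ S : Finset (V × V), IsOrientation S G ∧ (∀ v, #{u | (v, u) ∈ S} = t) ∧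
      ∀ v, #{u | (u, v) ∈ S} = t := by
  obtain ⟨S, hS, hout⟩ := exists_isOrientation_outdegree_le G fun v => (hG v).le
  have hdeg : ∀ v, #{u | (v, u) ∈ S} + #{u | (u, v) ∈ S} = 2 * t := fun v =>
    (hS.outdegree_add_indegree v).trans (hG v)
  have hle : ∀ v ∈ univ, #{u | (v, u) ∈ S} ≤ #{u | (u, v) ∈ S} := fun v _ => by
    have := hout v
    have := hdeg v
    omega
  have heq : ∀ v ∈ univ, #{u | (v, u) ∈ S} = #{u | (u, v) ∈ S} :=
    (sum_eq_sum_iff_of_le hle).1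
      (sum_card_bipartiteAbove_eq_sum_card_bipartiteBelow fun u v => (u, v) ∈ S)
  refine ⟨S, hS, fun v => ?_, fun v => ?_⟩ <;>
  · have := heq v (mem_univ v)
    have := hdeg v
    omega

end Orientation

section EdgeChoosable

variable {V W : Type*}

/-- The number of edges of `G` at `v` that receive the colour `x` from `c`. -/
noncomputable def colorDegree {C : Type*} (G : SimpleGraph V) (c : Sym2 V → C) (v : V) (x : C) :
    ℕ :=
  {u | G.Adj v u ∧ c s(v, u) = x}.ncard

/-- `G` is `k`-edge-choosable with colour classes of maximum degree at most `d`; the case `d = 1` is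
the usual `k`-edge-choosability. -/
def IsEdgeChoosable (G : SimpleGraph V) (k d : ℕ) : Prop :=
  ∀ L : Sym2 V → Finset ℕ, (∀ e ∈ G.edgeSet, #(L e) = k) →
    ∃ c : Sym2 V → ℕ, (∀ e ∈ G.edgeSet, c e ∈ L e) ∧ ∀ v x, colorDegree G c v x ≤ d

theorem IsEdgeChoosable.sup [Finite V] {G₁ G₂ : SimpleGraph V} {k d₁ d₂ : ℕ}
    (h₁ : IsEdgeChoosable G₁ k d₁) (h₂ : IsEdgeChoosable G₂ k d₂) :
    IsEdgeChoosable (G₁ ⊔ G₂) k (d₁ + d₂) := by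
  classical
  intro L hL
  rw [SimpleGraph.edgeSet_sup] at hL ⊢
  obtain ⟨c₁, hc₁, hd₁⟩ := h₁ L fun e he => hL e (.inl he)
  obtain ⟨c₂, hc₂, hd₂⟩ := h₂ L fun e he => hL e (.inr he)
  let c : Sym2 V → ℕ := fun e => if e ∈ G₁.edgeSet then c₁ e else c₂ e
  refine ⟨c, fun e he => ?_, fun v x => ?_⟩
  · by_cases h : e ∈ G₁.edgeSet
    · simpa only [c, if_pos h] using hc₁ e h
    · simpa only [c, if_neg h] using hc₂ e (he.resolve_left h)
  · calc colorDegree (G₁ ⊔ G₂) c v x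
      _ ≤ ({u | G₁.Adj v u ∧ c₁ s(v, u) = x} ∪ {u | G₂.Adj v u ∧ c₂ s(v, u) = x}).ncard := by
        refine Set.ncard_le_ncard fun u ⟨hadj, hx⟩ => ?_
        by_cases h : G₁.Adj v u
        · exact .inl ⟨h, by simpa only [c, SimpleGraph.mem_edgeSet, if_pos h] using hx⟩
        · exact .inr ⟨hadj.resolve_left h, by
            simpa only [c, SimpleGraph.mem_edgeSet, if_neg h] using hx⟩
      _ ≤ d₁ + d₂ := (Set.ncard_union_le _ _).trans (add_le_add (hd₁ v x) (hd₂ v x))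

theorem IsEdgeChoosable.of_embedding [Finite W] {H : SimpleGraph V} {G : SimpleGraph W} {k d : ℕ}
    (hG : IsEdgeChoosable G k d) (f : H ↪g G) : IsEdgeChoosable H k d := by
  intro L hL
  have hmap : Function.Injective (Sym2.map f) := Sym2.map.injective f.injective
  obtain ⟨c, hc, hd⟩ := hG (Function.extend (Sym2.map f) L fun _ => range k) fun e he => by
    by_cases h : ∃ e', Sym2.map f e' = e
    · obtain ⟨e', rfl⟩ := h
      rw [hmap.extend_apply]
      exact hL e' (f.map_mem_edgeSet_iff.1 he)
    · rw [Function.extend_apply' _ _ _ h, card_range]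
  refine ⟨fun e => c (Sym2.map f e), fun e he => ?_, fun v x => ?_⟩
  · simpa only [hmap.extend_apply] using hc _ (f.map_mem_edgeSet_iff.2 he)
  · refine le_trans ?_ (hd (f v) x)
    exact Set.ncard_le_ncard_of_injOn f (fun u hu => ⟨f.map_adj_iff.2 hu.1, hu.2⟩)
      f.injective.injOn

theorem IsOrientation.exists_list_coloring {S : Finset (V × V)} {G : SimpleGraph V}
    (hS : IsOrientation S G) {γ : Type*} [LinearOrder γ] {f : V × V → γ}
    (hf : IsProperEdgeColoring S f) {T : Finset γ} (hfT : ∀ p ∈ S, f p ∈ T) {k s : ℕ}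
    (hT : #T ≤ k * s) {L : Sym2 V → Finset ℕ} (hL : ∀ e ∈ G.edgeSet, #(L e) = k) :
    ∃ c : Sym2 V → ℕ, (∀ e ∈ G.edgeSet, c e ∈ L e) ∧
      (∀ v x, {u | (v, u) ∈ S ∧ c s(v, u) = x}.ncard ≤ s) ∧
      ∀ v x, {u | (u, v) ∈ S ∧ c s(v, u) = x}.ncard ≤ s := by
  obtain ⟨c, hc, hout, hin⟩ := hf.exists_list_coloring_ncard_le hfT s (fun p => L s(p.1, p.2))
    fun p hp => (hL s(p.1, p.2) (hS.adj_iff.2 (.inl hp))).symm ▸ hT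
  obtain ⟨c', hc'⟩ := hS.exists_sym2_extension c
  refine ⟨c', fun e he => ?_, fun v x => ?_, fun v x => ?_⟩
  · induction e with | _ u v =>
    rcases hS.adj_iff.1 he with h | h
    · exact hc' h ▸ hc _ h
    · rw [Sym2.eq_swap]
      exact hc' h ▸ hc _ h
  · convert hout v x using 4 with u
    exact and_congr_right fun h => by rw [hc' h]
  · convert hin v x using 4 with u
    exact and_congr_right fun h => by rw [Sym2.eq_swap, hc' h]

theorem isEdgeChoosable_of_isRegularOfDegree [Fintype V] {G : SimpleGraph V} [DecidableRel G.Adj]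
    {k s : ℕ} (hG : G.IsRegularOfDegree (2 * (k * s))) : IsEdgeChoosable G k (2 * s) := by
  classical
  intro L hL
  obtain ⟨S, hS, hout, hin⟩ := exists_balanced_isOrientation G hG
  obtain ⟨f, hf, hfd⟩ := exists_isProperEdgeColoring_of_regular hout hin
  obtain ⟨c, hc, hcout, hcin⟩ := hS.exists_list_coloring hf hfd (card_range _).le hL
  refine ⟨c, hc, fun v x => ?_⟩
  calc colorDegree G c v x
    _ = ({u | (v, u) ∈ S ∧ c s(v, u) = x} ∪ {u | (u, v) ∈ S ∧ c s(v, u) = x}).ncard := by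
      rw [colorDegree]
      congr 1
      ext u
      simp [hS.adj_iff, or_and_right]
    _ ≤ s + s := (Set.ncard_union_le _ _).trans (add_le_add (hcout v x) (hcin v x))
    _ = 2 * s := (two_mul s).symm

end EdgeChoosable

section SumGraph

variable {Γ : Type*}

/-- The Cayley sum graph of `T`: distinct `x` and `y` are adjacent when `x + y ∈ T`. -/
def sumGraph [AddCommMagma Γ] (T : Finset Γ) : SimpleGraph Γ where
  Adj x y := x ≠ y ∧ x + y ∈ T
  symm := ⟨fun x y h => ⟨h.1.symm, add_comm x y ▸ h.2⟩⟩
  loopless := ⟨fun _ h => h.1 rfl⟩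

/-- Every sum in `T` has exactly one summand in `A`. In particular no `x + x` lies in `T`, so that
`sumGraph T` is bipartite with parts `A` and its complement. -/
def SumsSplit [Add Γ] (T : Finset Γ) (A : Set Γ) : Prop :=
  ∀ x y, x + y ∈ T → (x ∈ A ↔ y ∉ A)

theorem SumsSplit.sumGraph_adj [AddCommMagma Γ] {T : Finset Γ} {A : Set Γ} (hA : SumsSplit T A)
    {x y : Γ} : (sumGraph T).Adj x y ↔ x + y ∈ T := by
  refine and_iff_right_of_imp ?_
  rintro h rfl
  exact iff_not_self (hA x x h)

theorem SumsSplit.isRegularOfDegree_sumGraph [AddCommGroup Γ] [Fintype Γ] {T : Finset Γ}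
    {A : Set Γ} (hA : SumsSplit T A) [DecidableRel (sumGraph T).Adj] :
    (sumGraph T).IsRegularOfDegree #T := by
  intro x
  rw [← SimpleGraph.card_neighborFinset_eq_degree]
  exact card_equiv (Equiv.addLeft x) fun y => by
    rw [SimpleGraph.mem_neighborFinset, hA.sumGraph_adj, Equiv.coe_addLeft]

/-- The sum `x + y` is itself a proper edge colouring of the sum graph with colours in `T`. -/
theorem SumsSplit.isEdgeChoosable_sumGraph [AddCommGroup Γ] [Finite Γ] [LinearOrder Γ]
    {T : Finset Γ} {A : Set Γ} (hA : SumsSplit T A) : IsEdgeChoosable (sumGraph T) #T 1 := by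
  classical
  have := Fintype.ofFinite Γ
  intro L hL
  let S : Finset (Γ × Γ) := {p | p.1 ∈ A ∧ p.1 + p.2 ∈ T}
  have mem_S : ∀ {u v}, (u, v) ∈ S ↔ u ∈ A ∧ u + v ∈ T := by simp [S]
  have hS : IsOrientation S (sumGraph T) := by
    refine ⟨fun {u v} huv hvu => ?_, fun {u v} => ?_⟩
    · exact (hA u v (mem_S.1 huv).2).1 (mem_S.1 huv).1 (mem_S.1 hvu).1
    · rw [hA.sumGraph_adj, mem_S, mem_S, add_comm v u, ← or_and_right, iff_and_self]
      have := hA u v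
      tauto
  have hproper : IsProperEdgeColoring S fun p => p.1 + p.2 := by
    rintro ⟨u, v⟩ - ⟨u', v'⟩ - (rfl | rfl) h
    · exact Prod.ext rfl (add_left_cancel h)
    · exact Prod.ext (add_right_cancel h) rfl
  obtain ⟨c, hc, hout, hin⟩ := hS.exists_list_coloring hproper (fun p hp => (mem_S.1 hp).2)
    (mul_one #T).ge hL
  refine ⟨c, hc, fun v x => ?_⟩
  by_cases hv : v ∈ A
  · refine (Set.ncard_le_ncard ?_).trans (hout v x)
    rintro u ⟨hadj, hx⟩
    exact ⟨mem_S.2 ⟨hv, hA.sumGraph_adj.1 hadj⟩, hx⟩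
  · refine (Set.ncard_le_ncard ?_).trans (hin v x)
    rintro u ⟨hadj, hx⟩
    have hsum := hA.sumGraph_adj.1 hadj.symm
    exact ⟨mem_S.2 ⟨(hA u v hsum).2 hv, hsum⟩, hx⟩

theorem exists_sumsSplit_card_eq {n k : ℕ} (hn : Even n) (hkn : 2 * k ≤ n) :
    ∃ (T : Finset (Fin n)) (A : Set (Fin n)), SumsSplit T A ∧ #T = k := by
  let oddEmb : Fin k ↪ Fin n :=
    ⟨fun i => ⟨2 * i + 1, by omega⟩, fun i j h => by simpa [Fin.ext_iff] using h⟩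
  refine ⟨univ.map oddEmb, {x | Even x.val}, fun x y hxy => ?_, by simp⟩
  obtain ⟨i, -, hi⟩ := mem_map.1 hxy
  have hsum : (x.val + y.val) % n = 2 * i + 1 := by rw [← Fin.val_add, ← hi]; rfl
  have hodd : Odd (x.val + y.val) := by
    rw [Nat.odd_iff, ← Nat.mod_mod_of_dvd _ hn.two_dvd, hsum]
    omega
  simpa [Nat.not_even_iff_odd] using (Nat.odd_add'.1 hodd).symm

end SumGraph

section CompleteGraph

theorem isEdgeChoosable_top_of_card_eq_two_mul {V : Type*} [Fintype V] {k s : ℕ}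
    (hV : Fintype.card V = 2 * (k * s) + 1) : IsEdgeChoosable (⊤ : SimpleGraph V) k (2 * s) := by
  classical
  refine isEdgeChoosable_of_isRegularOfDegree ?_
  simpa [hV] using SimpleGraph.IsRegularOfDegree.top (V := V)

theorem isEdgeChoosable_top_fin_of_odd {k s : ℕ} (hk : Odd k) (hs : 0 < s) :
    IsEdgeChoosable (⊤ : SimpleGraph (Fin ((2 * s + 1) * k + 1))) k (2 * s + 1) := by
  classical
  have hn : Even ((2 * s + 1) * k + 1) := ((odd_two_mul_add_one s).mul hk).add_one
  obtain ⟨T, A, hA, hT⟩ := exists_sumsSplit_card_eq hn (by nlinarith : 2 * k ≤ _)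
  have hsum : IsEdgeChoosable (sumGraph T) k 1 := by
    simpa only [hT] using hA.isEdgeChoosable_sumGraph
  have hcompl : (sumGraph T)ᶜ.IsRegularOfDegree (2 * (k * s)) := by
    have hdeg : Fintype.card (Fin ((2 * s + 1) * k + 1)) - 1 - #T = 2 * (k * s) := by
      rw [Fintype.card_fin, hT, Nat.add_sub_cancel, add_one_mul, Nat.add_sub_cancel, mul_assoc,
        mul_comm s]
    rw [← hdeg]
    convert hA.isRegularOfDegree_sumGraph.compl
  rw [← compl_sup_eq_top (x := sumGraph T)]
  exact (isEdgeChoosable_of_isRegularOfDegree hcompl).sup hsum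

theorem isEdgeChoosable_top_fin {k r n : ℕ} (hr : 3 ≤ r) (hrk : ¬ (Even r ∧ Even k))
    (hn : n ≤ (r - 1) * k + 1) : IsEdgeChoosable (⊤ : SimpleGraph (Fin n)) k (r - 1) := by
  suffices h : IsEdgeChoosable (⊤ : SimpleGraph (Fin ((r - 1) * k + 1))) k (r - 1) from
    h.of_embedding (.completeGraph (Fin.castLEEmb hn))
  obtain ⟨s, rfl | rfl⟩ := r.even_or_odd'
  · have hk : Odd k := Nat.not_even_iff_odd.1 fun hk => hrk ⟨even_two_mul s, hk⟩
    obtain ⟨s, rfl⟩ := Nat.exists_eq_add_of_lt (show 1 < s by omega)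
    have hsub : 2 * (1 + s + 1) - 1 = 2 * (s + 1) + 1 := by omega
    rw [hsub]
    exact isEdgeChoosable_top_fin_of_odd hk s.succ_pos
  · rw [Nat.add_sub_cancel]
    exact isEdgeChoosable_top_of_card_eq_two_mul (by rw [Fintype.card_fin]; ring)

end CompleteGraph

section Ramsey

/-- Every `k`-colouring of the edges of `K_n` contains a monochromatic copy of `G`, so that
`ramsey G k` is the least such `n`. -/
def IsRamsey {α : Type*} (G : SimpleGraph α) (k n : ℕ) : Prop :=
  ∀ c : Sym2 (Fin n) → Fin k, HasMonoCopy G c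

/-- Some assignment of `k`-element lists to the edges of `K_n` forces a monochromatic copy of `G`,
so that `listRamsey G k` is the least such `n`. -/
def IsListRamsey {α : Type*} (G : SimpleGraph α) (k n : ℕ) : Prop :=
  ∃ L : Sym2 (Fin n) → Finset ℕ, (∀ e : Sym2 (Fin n), ¬ e.IsDiag → #(L e) = k) ∧
    ∀ c : Sym2 (Fin n) → ℕ, (∀ e : Sym2 (Fin n), ¬ e.IsDiag → c e ∈ L e) → HasMonoCopy G c

theorem IsRamsey.isListRamsey {α : Type*} {G : SimpleGraph α} {k n : ℕ} (hk : 0 < k)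
    (h : IsRamsey G k n) : IsListRamsey G k n := by
  refine ⟨fun _ => range k, fun _ _ => card_range k, fun c hc => ?_⟩
  obtain ⟨f, x, hf, hx⟩ := h fun e => if he : c e < k then ⟨c e, he⟩ else ⟨0, hk⟩
  refine ⟨f, x, hf, fun a b hab => ?_⟩
  have hlt : c s(f a, f b) < k := mem_range.1 (hc _ (by simpa using hf.ne hab.ne))
  simp only [← hx a b hab, dif_pos hlt]

theorem hasMonoCopy_starGraph_iff {r n : ℕ} {β : Type*} {c : Sym2 (Fin n) → β} :
    HasMonoCopy (starGraph r) c ↔ ∃ v x, r ≤ colorDegree ⊤ c v x := by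
  classical
  constructor
  · rintro ⟨f, x, hf, hc⟩
    refine ⟨f 0, x, ?_⟩
    calc r = (Set.univ : Set (Fin r)).ncard := by simp
      _ ≤ colorDegree ⊤ c (f 0) x := Set.ncard_le_ncard_of_injOn (fun i => f i.succ)
        (fun i _ => ?_) (hf.comp (Fin.succ_injective r)).injOn
    have hne : (0 : Fin (r + 1)) ≠ i.succ := (Fin.succ_ne_zero i).symm
    exact ⟨hf.ne hne, hc _ _ ((SimpleGraph.fromRel_adj _ _ _).2 ⟨hne, .inl rfl⟩)⟩
  · rintro ⟨v, x, h⟩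
    rw [colorDegree, Set.ncard_eq_toFinset_card'] at h
    let leaf := orderEmbOfCardLe _ h
    have hleaf : ∀ i, leaf i ∈ {u | SimpleGraph.Adj ⊤ v u ∧ c s(v, u) = x} := fun i =>
      Set.mem_toFinset.1 (orderEmbOfCardLe_mem _ h i)
    refine ⟨Fin.cons v leaf, x, Fin.cons_injective_iff.2 ⟨?_, leaf.injective⟩, fun a b hab => ?_⟩
    · rintro ⟨i, hi⟩
      exact (hleaf i).1.ne hi.symm
    · obtain ⟨hne, rfl | rfl⟩ := (SimpleGraph.fromRel_adj _ _ _).1 hab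
      · obtain ⟨i, rfl⟩ := Fin.exists_succ_eq.2 hne.symm
        exact (hleaf i).2
      · obtain ⟨i, rfl⟩ := Fin.exists_succ_eq.2 hne
        rw [Sym2.eq_swap]
        exact (hleaf i).2

theorem isRamsey_starGraph {r k n : ℕ} (hn : (r - 1) * k + 1 < n) :
    IsRamsey (starGraph r) k n := by
  intro c
  let v : Fin n := ⟨0, by omega⟩
  obtain ⟨x, -, hx⟩ := exists_lt_card_fiber_of_mul_lt_card_of_maps_to (s := univ.erase v)
    (t := univ) (n := r - 1) (f := fun u => c s(v, u)) (fun _ _ => mem_univ _)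
    (by rw [card_erase_of_mem (mem_univ _), card_fin, card_fin, mul_comm]; omega)
  refine hasMonoCopy_starGraph_iff.2 ⟨v, x, (Nat.le_of_pred_lt hx).trans_eq ?_⟩
  rw [← Set.ncard_coe_finset]
  congr 1
  ext u
  simp [eq_comm]

theorem IsEdgeChoosable.not_isListRamsey_starGraph {k d r n : ℕ}
    (h : IsEdgeChoosable (⊤ : SimpleGraph (Fin n)) k d) (hdr : d < r) :
    ¬ IsListRamsey (starGraph r) k n := by
  rintro ⟨L, hL, hmono⟩
  obtain ⟨c, hc, hdeg⟩ := h L fun e he => hL e (SimpleGraph.not_isDiag_of_mem_edgeSet _ he)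
  obtain ⟨v, x, hr⟩ := hasMonoCopy_starGraph_iff.1 (hmono c fun e he => hc e (by simpa using he))
  exact (hdr.trans_le hr).not_ge (hdeg v x)

end Ramsey

theorem list_ramsey_star_large_general {k r : ℕ} (hk : 0 < k) (hr : 3 ≤ r)
    (hrk : ¬ (Even r ∧ Even k)) :
    listRamsey (starGraph r) k = (r - 1) * k + 2 ∧ ramsey (starGraph r) k = (r - 1) * k + 2 := by
  have hupper : IsRamsey (starGraph r) k ((r - 1) * k + 2) :=
    isRamsey_starGraph (Nat.lt_succ_self _)
  have hlower : ∀ n, IsListRamsey (starGraph r) k n → (r - 1) * k + 2 ≤ n := fun n hn => by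
    by_contra! hlt
    exact (isEdgeChoosable_top_fin hr hrk (Nat.le_of_lt_succ hlt)).not_isListRamsey_starGraph
      (by omega) hn
  exact ⟨IsLeast.csInf_eq ⟨hupper.isListRamsey hk, hlower⟩,
    IsLeast.csInf_eq ⟨hupper, fun n hn => hlower n (IsRamsey.isListRamsey hk hn)⟩⟩

theorem list_ramsey_star_large (k : ℕ) (hk : 0 < k) :
    ∃ w : ℕ, ∀ r : ℕ, w ≤ r → ¬ (Even r ∧ Even k) →
      listRamsey (starGraph r) k = (r - 1) * k + 2 ∧
      ramsey (starGraph r) k = (r - 1) * k + 2 :=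
  ⟨3, fun _ hr hrk => list_ramsey_star_large_general hk hr hrk⟩
end

section
/- Let r and k be positive integers with 2(k+1) ≤ log r. Then 2r ≤ R_ℓ(rK_2, k) ≤ 2r + 42·r^{k/(k+1)}. -/
/-- The matching `rK₂` consisting of `r` pairwise disjoint edges `{2i, 2i+1}`. -/
def matchingGraph (r : ℕ) : SimpleGraph (Fin (2 * r)) :=
  SimpleGraph.fromRel (fun a b => (b : ℕ) = (a : ℕ) + 1 ∧ (a : ℕ) % 2 = 0)

/-!
For the upper bound, take a maximum matching of a graph on `2 (r + p)` vertices with no `r`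
disjoint edges and split the unmatched vertices into halves `U₁` and `U₂`. The absence of
augmenting paths of length one and three makes the matching involution send every vertex that lies
in `U₁` or has a neighbour there to a vertex separated from `U₂`. Hence one of the halves is
separated from at least half of all vertices. If a colouring has no monochromatic `rK₂`, every
colour class thus misses all edges between two large disjoint sets. With random lists of `k` out of
`N` colours this is impossible: for each of the at most `4 ^ (2 (r + p) N)` choices of one pair of
sets per colour, with high probability some edge `e` runs between the two sets of every colour in
its list, so that no colour is left for `e`.
-/

open Finset Equiv SimpleGraph

section Matching

variable {V : Type*} {G : SimpleGraph V}

theorem matchingGraph_isContained_of_injective {r : ℕ} {a b : Fin r → V}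
    (hinj : Function.Injective (Sum.elim a b)) (hadj : ∀ i, G.Adj (a i) (b i)) :
    matchingGraph r ⊑ G := by
  let half (s : Fin (2 * r)) : Fin r := ⟨s / 2, by omega⟩
  let side (s : Fin (2 * r)) : Fin r ⊕ Fin r :=
    if (s : ℕ) % 2 = 0 then .inl (half s) else .inr (half s)
  have side_injective : Function.Injective side := by
    intro s t hst
    simp only [side, half] at hst
    split_ifs at hst <;>
      simp only [Sum.inl.injEq, Sum.inr.injEq, Fin.mk.injEq] at hst <;> omega
  have adj_of_succ {s t : Fin (2 * r)} (hst : (t : ℕ) = s + 1) (hs : (s : ℕ) % 2 = 0) :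
      G.Adj (Sum.elim a b (side s)) (Sum.elim a b (side t)) := by
    have hside_s : side s = .inl (half s) := if_pos hs
    have hside_t : side t = .inr (half t) := if_neg (by omega)
    have hhalf : half t = half s := Fin.ext (show (t : ℕ) / 2 = s / 2 by omega)
    rw [hside_s, hside_t, hhalf]
    exact hadj (half s)
  refine ⟨⟨⟨Sum.elim a b ∘ side, fun {s t} hst => ?_⟩, hinj.comp side_injective⟩⟩
  rcases ((fromRel_adj _ _ _).1 hst).2 with h | h
  · exact adj_of_succ h.1 h.2
  · exact (adj_of_succ h.1 h.2).symm

open Classical in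
/-- The vertices outside `A` without a neighbour in `A`. -/
noncomputable def separatedFrom [Fintype V] (G : SimpleGraph V) (A : Finset V) : Finset V :=
  {v | v ∉ A ∧ ∀ u ∈ A, ¬ G.Adj v u}

theorem mem_separatedFrom [Fintype V] {A : Finset V} {v : V} :
    v ∈ separatedFrom G A ↔ v ∉ A ∧ ∀ u ∈ A, ¬ G.Adj v u := by
  simp [separatedFrom]

/-- A matching of `G`, encoded as the involution that exchanges the two ends of each of its edges
and fixes the unmatched vertices; it has `#σ.support / 2` edges. -/
structure IsMatchingPerm (G : SimpleGraph V) (σ : Perm V) : Prop where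
  sq_eq_one : σ ^ 2 = 1
  adj : ∀ ⦃v⦄, σ v ≠ v → G.Adj v (σ v)

theorem IsMatchingPerm.one : IsMatchingPerm G 1 :=
  ⟨one_pow 2, fun _ h => absurd rfl h⟩

variable {σ : Perm V} {p q v : V}

theorem IsMatchingPerm.apply_apply (hσ : IsMatchingPerm G σ) (v : V) : σ (σ v) = v := by
  rw [← Perm.mul_apply, ← sq, hσ.sq_eq_one, Perm.one_apply]

variable [DecidableEq V]

theorem disjoint_swap_of_apply_eq (hp : σ p = p) (hq : σ q = q) :
    Perm.Disjoint σ (swap p q) := by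
  intro v
  rcases eq_or_ne v p with rfl | hvp
  · exact .inl hp
  rcases eq_or_ne v q with rfl | hvq
  · exact .inl hq
  exact .inr (swap_apply_of_ne_of_ne hvp hvq)

theorem IsMatchingPerm.mul_swap (hσ : IsMatchingPerm G σ) (hp : σ p = p) (hq : σ q = q)
    (hpq : G.Adj p q) : IsMatchingPerm G (σ * swap p q) where
  sq_eq_one := by
    rw [(disjoint_swap_of_apply_eq hp hq).commute.mul_pow, hσ.sq_eq_one, sq, swap_mul_self, one_mul]
  adj v hv := by
    rcases eq_or_ne v p with rfl | hvp
    · simpa [hq] using hpq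
    rcases eq_or_ne v q with rfl | hvq
    · simpa [hp] using hpq.symm
    rw [Perm.mul_apply, swap_apply_of_ne_of_ne hvp hvq] at hv ⊢
    exact hσ.adj hv

/-- Conjugating by `swap (σ v) p` rematches `v` from `σ v` to the unmatched vertex `p`. -/
theorem IsMatchingPerm.conj_swap (hσ : IsMatchingPerm G σ) (hp : σ p = p) (hvp : G.Adj v p) :
    IsMatchingPerm G (swap (σ v) p * σ * (swap (σ v) p)⁻¹) where
  sq_eq_one := by rw [conj_pow, hσ.sq_eq_one, mul_one, mul_inv_cancel]
  adj w hw := by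
    simp only [Perm.mul_apply, swap_inv] at hw ⊢
    rcases eq_or_ne w (σ v) with rfl | hwv
    · simp [hp] at hw
    rcases eq_or_ne w p with rfl | hwp
    · rw [swap_apply_right, hσ.apply_apply] at hw ⊢
      rcases eq_or_ne v (σ v) with hv | hv
      · exact absurd (by rw [hv, hσ.apply_apply, ← hv, swap_apply_left]) hw
      · rw [swap_apply_of_ne_of_ne hv hvp.ne]
        exact hvp.symm
    rw [swap_apply_of_ne_of_ne hwv hwp] at hw ⊢
    rcases eq_or_ne w v with rfl | hwv'
    · rwa [swap_apply_left]
    have hne : σ w ≠ p := fun h => hwp (σ.injective (h.trans hp.symm))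
    rw [swap_apply_of_ne_of_ne (σ.injective.ne hwv') hne] at hw ⊢
    exact hσ.adj hw

variable [Fintype V]

/-- The matching `σ` has the largest number of edges among all matchings of `G`. -/
structure IsMaximumMatchingPerm (G : SimpleGraph V) (σ : Perm V) : Prop
    extends IsMatchingPerm G σ where
  card_support_le : ∀ ⦃τ⦄, IsMatchingPerm G τ → #τ.support ≤ #σ.support

theorem exists_isMaximumMatchingPerm (G : SimpleGraph V) :
    ∃ σ : Perm V, IsMaximumMatchingPerm G σ := by
  classical
  obtain ⟨σ, hσ, hmax⟩ := exists_max_image ({σ | IsMatchingPerm G σ} : Finset (Perm V))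
    (fun σ => #σ.support) ⟨1, by simpa using IsMatchingPerm.one⟩
  simp only [mem_filter_univ] at hσ hmax
  exact ⟨σ, hσ, hmax⟩

theorem IsMaximumMatchingPerm.not_adj (hσ : IsMaximumMatchingPerm G σ) (hp : σ p = p)
    (hq : σ q = q) : ¬ G.Adj p q := by
  intro hpq
  have hle := hσ.card_support_le (hσ.mul_swap hp hq hpq)
  rw [(disjoint_swap_of_apply_eq hp hq).card_support_mul, Perm.card_support_swap hpq.ne] at hle
  omega

/-- Otherwise `p, v, σ v, q` is an augmenting path. -/
theorem IsMaximumMatchingPerm.eq_of_adj_of_adj (hσ : IsMaximumMatchingPerm G σ) (hp : σ p = p)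
    (hq : σ q = q) (hvp : G.Adj v p) (hvq : G.Adj (σ v) q) : p = q := by
  by_contra hpq
  have hτ : IsMaximumMatchingPerm G (swap (σ v) p * σ * (swap (σ v) p)⁻¹) :=
    ⟨hσ.conj_swap hp hvp, fun ρ hρ => by
      rw [Perm.card_support_conj]
      exact hσ.card_support_le hρ⟩
  refine hτ.not_adj ?_ ?_ hvq
  · simp [hp]
  · simp [swap_apply_of_ne_of_ne hvq.ne' (Ne.symm hpq), hq]

theorem IsMaximumMatchingPerm.apply_mem_separatedFrom (hσ : IsMaximumMatchingPerm G σ)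
    {A B : Finset V} (hAB : Disjoint A B) (hA : ∀ u ∈ A, σ u = u) (hB : ∀ u ∈ B, σ u = u)
    (hv : v ∉ separatedFrom G A) : σ v ∈ separatedFrom G B := by
  have hv' : v ∈ A ∨ ∃ u ∈ A, G.Adj v u := by
    by_contra! h
    exact hv (mem_separatedFrom.2 h)
  refine mem_separatedFrom.2 ⟨fun hvB => ?_, fun w hw hvw => ?_⟩
  · have hfix : σ v = v := σ.injective (hB _ hvB)
    rw [hfix] at hvB
    rcases hv' with hvA | ⟨u, hu, hvu⟩
    · exact disjoint_left.1 hAB hvA hvB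
    · exact hσ.not_adj hfix (hA u hu) hvu
  · rcases hv' with hvA | ⟨u, hu, hvu⟩
    · rw [hA v hvA] at hvw
      exact hσ.not_adj (hA v hvA) (hB w hw) hvw
    · exact disjoint_left.1 hAB hu (hσ.eq_of_adj_of_adj (hA u hu) (hB w hw) hvu hvw ▸ hw)

theorem IsMaximumMatchingPerm.card_le_card_separatedFrom_add (hσ : IsMaximumMatchingPerm G σ)
    {A B : Finset V} (hAB : Disjoint A B) (hA : ∀ u ∈ A, σ u = u) (hB : ∀ u ∈ B, σ u = u) :
    Fintype.card V ≤ #(separatedFrom G A) + #(separatedFrom G B) := by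
  have hle : #(separatedFrom G A)ᶜ ≤ #(separatedFrom G B) :=
    card_le_card_of_injOn σ
      (fun v hv => hσ.apply_mem_separatedFrom hAB hA hB (by simpa using hv)) σ.injective.injOn
  rw [← card_add_card_compl (separatedFrom G A)]
  exact Nat.add_le_add_left hle _

theorem IsMatchingPerm.exists_half_support (hσ : IsMatchingPerm G σ) :
    ∃ A : Finset V, #σ.support ≤ 2 * #A ∧ ∀ v ∈ A, σ v ∉ A := by
  let e := Fintype.equivFin V
  let A : Finset V := {v | e v < e (σ v)}
  have hcover : σ.support ⊆ A ∪ image σ A := by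
    intro v hv
    simp only [A, mem_union, mem_image, mem_filter_univ]
    rcases (e.injective.ne (Perm.mem_support.1 hv)).lt_or_gt with h | h
    · exact .inr ⟨σ v, by rwa [hσ.apply_apply], hσ.apply_apply v⟩
    · exact .inl h
  refine ⟨A, (card_le_card hcover).trans ((card_union_le _ _).trans ?_), fun v hv hv' => ?_⟩
  · rw [card_image_of_injective _ σ.injective, two_mul]
  · simp only [A, mem_filter_univ, hσ.apply_apply] at hv hv'
    exact lt_asymm hv hv'

theorem IsMatchingPerm.matchingGraph_isContained (hσ : IsMatchingPerm G σ) {r : ℕ}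
    (hr : 2 * r ≤ #σ.support) : matchingGraph r ⊑ G := by
  obtain ⟨A, hcard, hA⟩ := hσ.exists_half_support
  obtain ⟨g⟩ := Function.Embedding.nonempty_of_card_le (α := Fin r) (β := A)
    (by rw [Fintype.card_fin, Fintype.card_coe]; omega)
  have hg : Function.Injective fun i => (g i : V) := Subtype.val_injective.comp g.injective
  have hne (i j : Fin r) : (g i : V) ≠ σ (g j) := fun h => hA _ (g j).2 (h ▸ (g i).2)
  exact matchingGraph_isContained_of_injective (a := fun i => g i) (b := fun i => σ (g i))
    (Sum.elim_injective.2 ⟨hg, σ.injective.comp hg, hne⟩) fun i => hσ.adj (hne i i).symm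

omit [DecidableEq V] in
/-- The set `A` consists of half of the vertices left unmatched by a maximum matching. -/
theorem exists_separated_of_matchingGraph_free {r : ℕ} (hG : (matchingGraph r).Free G) :
    ∃ A B : Finset V, Disjoint A B ∧ (∀ u ∈ A, ∀ v ∈ B, ¬ G.Adj u v) ∧
      Fintype.card V / 2 < #A + r ∧ Fintype.card V ≤ 2 * #B := by
  classical
  obtain ⟨σ, hσ⟩ := exists_isMaximumMatchingPerm G
  have hlt : #σ.support < 2 * r := not_le.1 fun h => hG (hσ.matchingGraph_isContained h)
  have heven : 2 ∣ #σ.support := Perm.two_dvd_card_support hσ.sq_eq_one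
  have hcompl := card_add_card_compl σ.support
  suffices ∃ A : Finset V, #σ.supportᶜ / 2 ≤ #A ∧ Fintype.card V ≤ 2 * #(separatedFrom G A) by
    obtain ⟨A, hA, hB⟩ := this
    exact ⟨A, separatedFrom G A, disjoint_right.2 fun v hv => (mem_separatedFrom.1 hv).1,
      fun u hu v hv huv => (mem_separatedFrom.1 hv).2 u hu huv.symm, by omega, hB⟩
  have hfix : ∀ u ∈ σ.supportᶜ, σ u = u := by simp
  obtain ⟨U, hU, hUcard⟩ := exists_subset_card_eq (Nat.div_le_self #σ.supportᶜ 2)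
  have hUcard' := card_sdiff_of_subset hU
  have hsum := hσ.card_le_card_separatedFrom_add (disjoint_sdiff (s := U) (t := σ.supportᶜ))
    (fun u hu => hfix u (hU hu)) (fun u hu => hfix u (sdiff_subset hu))
  rcases le_total #(separatedFrom G (σ.supportᶜ \ U)) #(separatedFrom G U) with h | h
  · exact ⟨U, hUcard.ge, by omega⟩
  · exact ⟨σ.supportᶜ \ U, by omega, by omega⟩

end Matching

section RandomLists

variable {α E ι Φ : Type*} [Fintype E]

theorem prod_card_sdiff_le [DecidableEq α] {T good : E → Finset α} (hgood : ∀ e, good e ⊆ T e) :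
    (∏ e, #(T e \ good e) : ℝ) ≤
      (∏ e, (#(T e) : ℝ)) * Real.exp (-∑ e, (#(good e) : ℝ) / #(T e)) := by
  rw [← sum_neg_distrib, Real.exp_sum, ← prod_mul_distrib]
  refine prod_le_prod (fun e _ => Nat.cast_nonneg _) fun e _ => ?_
  rcases (T e).eq_empty_or_nonempty with hT | hT
  · simp [hT]
  have hT0 : (#(T e) : ℝ) ≠ 0 := by exact_mod_cast hT.card_ne_zero
  calc (#(T e \ good e) : ℝ) = #(T e) * (1 - #(good e) / #(T e)) := by
        rw [cast_card_sdiff (hgood e), mul_sub, mul_one, mul_div_cancel₀ _ hT0]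
    _ ≤ #(T e) * Real.exp (-(#(good e) / #(T e))) := by
        gcongr
        exact Real.one_sub_le_exp_neg _

/-- The union bound over `S` for independent uniform choices of `L e ∈ T e`. -/
theorem exists_choice_meeting {T : E → Finset α} (hT : ∀ e, (T e).Nonempty)
    {good : Φ → E → Finset α} (hgood : ∀ F e, good F e ⊆ T e) {S : Finset Φ} {l : ℝ}
    (hl : ∀ F ∈ S, l ≤ ∑ e, (#(good F e) : ℝ) / #(T e)) (hS : (#S : ℝ) < Real.exp l) :
    ∃ L : E → α, (∀ e, L e ∈ T e) ∧ ∀ F ∈ S, ∃ e, L e ∈ good F e := by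
  classical
  by_contra! H
  have hcover : Fintype.piFinset T ⊆
      S.biUnion fun F => Fintype.piFinset fun e => T e \ good F e := by
    intro L hL
    obtain ⟨F, hF, hLF⟩ := H L (Fintype.mem_piFinset.1 hL)
    exact mem_biUnion.2 ⟨F, hF, Fintype.mem_piFinset.2 fun e =>
      mem_sdiff.2 ⟨Fintype.mem_piFinset.1 hL e, hLF e⟩⟩
  have hcount : ∏ e, (#(T e) : ℝ) ≤ ∑ F ∈ S, ∏ e, (#(T e \ good F e) : ℝ) := by
    have := (card_le_card hcover).trans card_biUnion_le
    simp only [Fintype.card_piFinset] at this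
    exact_mod_cast this
  have hpos : 0 < ∏ e, (#(T e) : ℝ) := prod_pos fun e _ => by exact_mod_cast (hT e).card_pos
  refine hcount.not_gt ?_
  calc ∑ F ∈ S, ∏ e, (#(T e \ good F e) : ℝ)
      ≤ ∑ _F ∈ S, (∏ e, (#(T e) : ℝ)) * Real.exp (-l) := sum_le_sum fun F hF =>
        (prod_card_sdiff_le (hgood F)).trans (by gcongr; exact hl F hF)
    _ = #S * Real.exp (-l) * ∏ e, (#(T e) : ℝ) := by rw [sum_const, nsmul_eq_mul]; ring
    _ < Real.exp l * Real.exp (-l) * ∏ e, (#(T e) : ℝ) := by gcongr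
    _ = ∏ e, (#(T e) : ℝ) := by rw [← Real.exp_add, add_neg_cancel, Real.exp_zero, one_mul]

theorem div_pow_le_choose_div_choose {N k : ℕ} (hkN : k ≤ N) (d : ℕ) :
    (((d + 1 - k : ℕ) : ℝ) / N) ^ k ≤ (d.choose k : ℝ) / N.choose k := by
  have hchoose : (0 : ℝ) < N.choose k := by exact_mod_cast Nat.choose_pos hkN
  calc (((d + 1 - k : ℕ) : ℝ) / N) ^ k
      = ((d + 1 - k : ℕ) : ℝ) ^ k / k.factorial / ((N : ℝ) ^ k / k.factorial) := by
        rw [div_pow, div_div_div_cancel_right₀ (by positivity)]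
    _ ≤ (d.choose k : ℝ) / N.choose k := by
        gcongr
        · exact Nat.pow_le_choose k d
        · exact Nat.choose_le_pow_div k N

theorem card_mul_pow_le_sum_pow {f : E → ℝ} (hf : ∀ e, 0 ≤ f e) {t : ℝ} (ht : 0 ≤ t)
    (hsum : Fintype.card E * t ≤ ∑ e, f e) (k : ℕ) :
    Fintype.card E * t ^ k ≤ ∑ e, f e ^ k := by
  rcases k with _ | k
  · simp
  rcases isEmpty_or_nonempty E with hE | hE
  · simp
  refine le_trans ?_ (pow_sum_div_card_le_sum_pow (fun e _ => hf e) k)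
  rw [card_univ, le_div_iff₀ (by positivity)]
  calc (Fintype.card E : ℝ) * t ^ (k + 1) * (Fintype.card E : ℝ) ^ k
      = (Fintype.card E * t) ^ (k + 1) := by ring
    _ ≤ (∑ e, f e) ^ (k + 1) := by gcongr

theorem card_mul_pow_le_sum_choose_div {N k : ℕ} (hk : k ≠ 0) (hkN : k ≤ N) {t : ℝ} (ht : 0 ≤ t)
    {d : E → ℕ} (hd : Fintype.card E * (t * N + (k - 1)) ≤ ∑ e, (d e : ℝ)) :
    Fintype.card E * t ^ k ≤ ∑ e, ((d e).choose k : ℝ) / N.choose k := by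
  have hN : (0 : ℝ) < N := by exact_mod_cast (Nat.pos_of_ne_zero hk).trans_le hkN
  refine (card_mul_pow_le_sum_pow (fun e => by positivity) ht ?_ k).trans
    (sum_le_sum fun e _ => div_pow_le_choose_div_choose hkN (d e))
  rw [← sum_div, le_div_iff₀ hN]
  calc Fintype.card E * t * N = Fintype.card E * (t * N + (k - 1)) - ∑ _e : E, ((k : ℝ) - 1) := by
        rw [sum_const, card_univ, nsmul_eq_mul]; ring
    _ ≤ ∑ e, (d e : ℝ) - ∑ _e : E, ((k : ℝ) - 1) := sub_le_sub_right hd _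
    _ = ∑ e, ((d e : ℝ) - (k - 1)) := (sum_sub_distrib _ _).symm
    _ ≤ ∑ e, ((d e + 1 - k : ℕ) : ℝ) := sum_le_sum fun e _ => by
        have : (d e : ℝ) + 1 ≤ (d e + 1 - k : ℕ) + k := by exact_mod_cast le_tsub_add
        linarith

/-- By convexity, a uniformly random `k`-element list lies in `D F e` with probability at least
`t ^ k` on average over `e`. -/
theorem exists_lists_subset [Fintype ι] {k : ℕ} (hk : k ≠ 0) (hkι : k ≤ Fintype.card ι) {t : ℝ}
    (ht : 0 ≤ t) {S : Finset Φ} {D : Φ → E → Finset ι}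
    (hD : ∀ F ∈ S, Fintype.card E * (t * Fintype.card ι + (k - 1)) ≤ ∑ e, (#(D F e) : ℝ))
    (hS : (#S : ℝ) < Real.exp (Fintype.card E * t ^ k)) :
    ∃ L : E → Finset ι, (∀ e, #(L e) = k) ∧ ∀ F ∈ S, ∃ e, L e ⊆ D F e := by
  classical
  obtain ⟨L, hL, hLD⟩ := exists_choice_meeting (T := fun _ : E => powersetCard k univ)
    (fun _ => powersetCard_nonempty.2 hkι)
    (good := fun F e => powersetCard k (D F e)) (fun F e => powersetCard_mono (subset_univ _))
    (fun F hF => by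
      simpa only [card_powersetCard, card_univ] using
        card_mul_pow_le_sum_choose_div hk hkι ht (hD F hF)) hS
  refine ⟨L, fun e => (mem_powersetCard.1 (hL e)).2, fun F hF => ?_⟩
  obtain ⟨e, he⟩ := hLD F hF
  exact ⟨e, (mem_powersetCard.1 he).1⟩

end RandomLists

section EdgesBetween

variable {V : Type*} [DecidableEq V]

/-- The edges joining `A` to `B`; a loop occurs exactly for each common element. -/
def edgesBetween (A B : Finset V) : Finset (Sym2 V) :=
  image₂ (fun u v => s(u, v)) A B

theorem card_edgesBetween {A B : Finset V} (hAB : Disjoint A B) :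
    #(edgesBetween A B) = #A * #B := by
  refine card_image₂_iff.2 ?_
  rintro ⟨u, v⟩ ⟨hu, -⟩ ⟨u', v'⟩ ⟨-, hv'⟩ h
  rcases Sym2.eq_iff.1 h with ⟨hu, hv⟩ | ⟨huv, -⟩
  · exact Prod.ext hu hv
  · dsimp only at huv hu hv'
    exact absurd (huv ▸ hv') (disjoint_left.1 hAB hu)

theorem not_isDiag_of_mem_edgesBetween {A B : Finset V} (hAB : Disjoint A B) {e : Sym2 V}
    (he : e ∈ edgesBetween A B) : ¬ e.IsDiag := by
  obtain ⟨u, hu, v, hv, rfl⟩ := mem_image₂.1 he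
  exact disjoint_iff_ne.1 hAB u hu v hv

theorem exists_lists_edgesBetween {ι : Type*} [Fintype V] [Fintype ι] {k a b : ℕ} (hk : k ≠ 0)
    (hkι : k ≤ Fintype.card ι) {t : ℝ} (ht : 0 ≤ t)
    (hab : Fintype.card (Sym2 V) * (t * Fintype.card ι + (k - 1)) ≤ Fintype.card ι * (a * b))
    (hcount : Fintype.card V * Fintype.card ι * Real.log 4 < Fintype.card (Sym2 V) * t ^ k) :
    ∃ L : Sym2 V → Finset ι, (∀ e, #(L e) = k) ∧ ∀ A B : ι → Finset V,
      (∀ i, Disjoint (A i) (B i)) → (∀ i, a ≤ #(A i)) → (∀ i, b ≤ #(B i)) →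
        ∃ e, ∀ i ∈ L e, e ∈ edgesBetween (A i) (B i) := by
  classical
  let S : Finset (ι → Finset V × Finset V) :=
    {F | ∀ i, Disjoint (F i).1 (F i).2 ∧ a ≤ #(F i).1 ∧ b ≤ #(F i).2}
  let D (F : ι → Finset V × Finset V) (e : Sym2 V) : Finset ι :=
    {i | e ∈ edgesBetween (F i).1 (F i).2}
  have hD : ∀ F ∈ S, Fintype.card (Sym2 V) * (t * Fintype.card ι + (k - 1)) ≤
      ∑ e, (#(D F e) : ℝ) := by
    intro F hF
    simp only [S, mem_filter_univ] at hF
    refine hab.trans ?_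
    have hdouble : ∑ e, #(D F e) = ∑ i, #(edgesBetween (F i).1 (F i).2) := by
      simp only [D, card_eq_sum_ones, sum_filter]
      rw [sum_comm]
      simp
    have hle : Fintype.card ι * (a * b) ≤ ∑ e, #(D F e) := by
      rw [hdouble, ← smul_eq_mul, ← card_univ]
      refine card_nsmul_le_sum _ _ _ fun i _ => ?_
      rw [card_edgesBetween (hF i).1]
      exact Nat.mul_le_mul (hF i).2.1 (hF i).2.2
    exact_mod_cast hle
  have hS : (#S : ℝ) < Real.exp (Fintype.card (Sym2 V) * t ^ k) := by
    calc (#S : ℝ) ≤ (4 : ℝ) ^ (Fintype.card V * Fintype.card ι) := by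
          have := card_le_univ S
          rw [Fintype.card_fun, Fintype.card_prod, Fintype.card_finset, ← mul_pow,
            ← pow_mul] at this
          exact_mod_cast this
      _ = Real.exp (Fintype.card V * Fintype.card ι * Real.log 4) := by
          rw [← Nat.cast_mul, Real.exp_nat_mul, Real.exp_log (by norm_num)]
      _ < Real.exp (Fintype.card (Sym2 V) * t ^ k) := Real.exp_lt_exp.2 hcount
  obtain ⟨L, hLk, hL⟩ := exists_lists_subset hk hkι ht hD hS
  refine ⟨L, hLk, fun A B hAB hA hB => ?_⟩
  obtain ⟨e, he⟩ := hL (fun i => (A i, B i)) (by simp [S, hAB, hA, hB])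
  exact ⟨e, fun i hi => by simpa [D] using he hi⟩

end EdgesBetween

section ListRamsey

/-- Some assignment of `k` colours to each edge of `K_n` forces a monochromatic `G`, so that
`listRamsey G k` is the least `n` with `ForcedByLists G k n`. -/
def ForcedByLists {α : Type*} (G : SimpleGraph α) (k n : ℕ) : Prop :=
  ∃ L : Sym2 (Fin n) → Finset ℕ, (∀ e, ¬ e.IsDiag → #(L e) = k) ∧
    ∀ c : Sym2 (Fin n) → ℕ, (∀ e, ¬ e.IsDiag → c e ∈ L e) → HasMonoCopy G c

variable {α : Type*} {G : SimpleGraph α} {k n : ℕ}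

theorem ForcedByLists.listRamsey_le (h : ForcedByLists G k n) : listRamsey G k ≤ n :=
  Nat.sInf_le h

theorem ForcedByLists.card_le [Fintype α] (h : ForcedByLists G k n) (hk : k ≠ 0) :
    Fintype.card α ≤ n := by
  obtain ⟨L, hLk, hL⟩ := h
  have hcolour (e : Sym2 (Fin n)) : ∃ x, ¬ e.IsDiag → x ∈ L e := by
    by_cases he : e.IsDiag
    · exact ⟨0, absurd he⟩
    · obtain ⟨x, hx⟩ := card_ne_zero.1 ((hLk e he).trans_ne hk)
      exact ⟨x, fun _ => hx⟩
  choose c hc using hcolour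
  obtain ⟨f, -, hf, -⟩ := hL c hc
  simpa only [Fintype.card_fin] using Fintype.card_le_of_injective f hf

theorem ForcedByLists.card_le_listRamsey [Fintype α] (h : ForcedByLists G k n) (hk : k ≠ 0) :
    Fintype.card α ≤ listRamsey G k :=
  have hmem : ForcedByLists G k (listRamsey G k) :=
    Nat.sInf_mem (s := {m | ForcedByLists G k m}) ⟨n, h⟩
  hmem.card_le hk

theorem hasMonoCopy_of_isContained {β : Type*} {c : Sym2 (Fin n) → β} {x : β}
    (h : G ⊑ fromEdgeSet (c ⁻¹' {x})) : HasMonoCopy G c := by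
  obtain ⟨f⟩ := h
  exact ⟨f, x, f.injective, fun _ _ hab => ((fromEdgeSet_adj _).1 (f.toHom.map_adj hab)).1⟩

theorem forcedByLists_matchingGraph {r p N : ℕ} (hr : r ≠ 0) (hk : k ≠ 0) (hkN : k ≤ N) {t : ℝ}
    (ht : 0 ≤ t) (hcross : (2 * (r + p) + 1) * (t * N + (k - 1)) ≤ (N * (p + 1) : ℝ))
    (hcount : 2 * N * Real.log 4 < (2 * (r + p) + 1) * t ^ k) :
    ForcedByLists (matchingGraph r) k (2 * (r + p)) := by
  have hedges : (Fintype.card (Sym2 (Fin (2 * (r + p)))) : ℝ) = (r + p) * (2 * (r + p) + 1) := by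
    rw [Sym2.card, Fintype.card_fin, Nat.cast_choose_two]
    push_cast
    ring
  obtain ⟨L, hLk, hL⟩ := exists_lists_edgesBetween (V := Fin (2 * (r + p))) (ι := Fin N)
    (a := p + 1) (b := r + p) hk (by rwa [Fintype.card_fin]) ht
    (by
      rw [hedges, Fintype.card_fin]
      push_cast
      linear_combination (r + p : ℝ) * hcross)
    (by
      rw [hedges, Fintype.card_fin, Fintype.card_fin]
      push_cast
      linear_combination (r + p : ℝ) * hcount)
  refine ⟨fun e => (L e).map Fin.valEmbedding, fun e _ => by rw [card_map, hLk], fun c hc => ?_⟩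
  by_contra hmono
  have hfree (i : Fin N) : (matchingGraph r).Free (fromEdgeSet (c ⁻¹' {(i : ℕ)})) :=
    fun h => hmono (hasMonoCopy_of_isContained h)
  choose A B hAB hsep hA hB using fun i => exists_separated_of_matchingGraph_free (hfree i)
  simp only [Fintype.card_fin] at hA hB
  obtain ⟨e, he⟩ := hL A B hAB (fun i => by have := hA i; omega) (fun i => by have := hB i; omega)
  have hdiag : ¬ e.IsDiag := by
    obtain ⟨i, hi⟩ := card_ne_zero.1 ((hLk e).trans_ne hk)
    exact not_isDiag_of_mem_edgesBetween (hAB i) (he i hi)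
  obtain ⟨i, hi, hic⟩ := mem_map.1 (hc e hdiag)
  obtain ⟨u, hu, v, hv, rfl⟩ := mem_image₂.1 (he i hi)
  exact hsep i u hu v hv ((fromEdgeSet_adj _).2 ⟨hic.symm, hdiag⟩)

end ListRamsey

section Parameters

theorem mul_log_four_lt_pow {k : ℕ} (hk : k ≠ 0) : k * Real.log 4 < 1.7 ^ k := by
  have hlog : Real.log 4 < 1.4 := by
    rw [show (4 : ℝ) = 2 ^ 2 by norm_num, Real.log_pow]
    push_cast
    linarith [Real.log_two_lt_d9]
  have hk' : (0 : ℝ) < k := by exact_mod_cast Nat.pos_of_ne_zero hk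
  refine (mul_lt_mul_of_pos_left hlog hk').trans ?_
  rcases (Nat.one_le_iff_ne_zero.2 hk).eq_or_lt with rfl | hk2
  · norm_num
  clear hk hk'
  induction k, hk2 using Nat.le_induction with
  | base => norm_num
  | succ k hk2 ih =>
    have : (2 : ℝ) ≤ k := by exact_mod_cast hk2
    rw [pow_succ]
    push_cast
    linarith

/-- With `N = ⌊k x⌋` colours, `t = 1.7 / x` makes the expected number of good edges exceed the
entropy because `k * log 4 < 1.7 ^ k`; then `p = ⌊21 x ^ k⌋` makes the separated sets large enough
for this `t`. -/
theorem exists_forcedByLists_matchingGraph {r k : ℕ} {x : ℝ} (hk : k ≠ 0) (hx : 7.3 ≤ x)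
    (hxr : x ^ (k + 1) = r) :
    ∃ n : ℕ, (n : ℝ) ≤ 2 * r + 42 * x ^ k ∧ ForcedByLists (matchingGraph r) k n := by
  have hx0 : 0 < x := by linarith
  have hk1 : (1 : ℝ) ≤ k := by exact_mod_cast Nat.one_le_iff_ne_zero.2 hk
  have hr : (r : ℝ) = x * x ^ k := by rw [← hxr, pow_succ']
  have hrx : x * x ≤ r := by
    rw [hr]
    gcongr
    exact le_self_pow₀ (by linarith) hk
  obtain ⟨p, hp, hp'⟩ : ∃ p : ℕ, (p : ℝ) ≤ 21 * x ^ k ∧ 21 * x ^ k < p + 1 :=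
    ⟨_, Nat.floor_le (by positivity), Nat.lt_floor_add_one _⟩
  obtain ⟨N, hN, hN'⟩ : ∃ N : ℕ, (N : ℝ) ≤ k * x ∧ k * x < N + 1 :=
    ⟨_, Nat.floor_le (by positivity), Nat.lt_floor_add_one _⟩
  have hkN : (k : ℝ) ≤ N := by nlinarith
  refine ⟨2 * (r + p), by push_cast; linarith, forcedByLists_matchingGraph (N := N) (t := 1.7 / x)
    ?_ hk (by exact_mod_cast hkN) (by positivity) ?_ ?_⟩
  · rintro rfl
    norm_num at hrx
    nlinarith
  · have hpr : p * 7.3 ≤ 21 * (r : ℝ) := by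
      calc (p : ℝ) * 7.3 ≤ 21 * x ^ k * x := by gcongr
        _ = 21 * r := by rw [hr]; ring
    have hrp : 21 * r ≤ x * (p + 1) := by
      calc 21 * (r : ℝ) = x * (21 * x ^ k) := by rw [hr]; ring
        _ ≤ x * (p + 1) := by gcongr
    have hr50 : 50 ≤ (r : ℝ) := by nlinarith
    have hn : 2.7 * (2 * (r + p) + 1) ≤ x * (p + 1) := by linarith
    have hkx : (k - 1 : ℝ) ≤ N / x := by
      rw [le_div_iff₀ hx0]
      linarith
    calc (2 * (r + p) + 1) * (1.7 / x * N + (k - 1))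
        ≤ (2 * (r + p) + 1) * (1.7 / x * N + N / x) := by gcongr
      _ = N / x * (2.7 * (2 * (r + p) + 1)) := by ring
      _ ≤ N / x * (x * (p + 1)) := by gcongr
      _ = N * (p + 1) := by field_simp
  · calc 2 * N * Real.log 4 ≤ 2 * (k * x) * Real.log 4 := by gcongr
      _ = 2 * x * (k * Real.log 4) := by ring
      _ < 2 * x * 1.7 ^ k := by gcongr; exact mul_log_four_lt_pow hk
      _ = 2 * r * (1.7 / x) ^ k := by rw [hr, div_pow]; field_simp
      _ ≤ (2 * (r + p) + 1) * (1.7 / x) ^ k := by gcongr; linarith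

end Parameters

theorem list_ramsey_matching_few_colours (r k : ℕ) (hr : 0 < r) (hk : 0 < k)
    (h : 2 * ((k : ℝ) + 1) ≤ Real.log r) :
    2 * r ≤ listRamsey (matchingGraph r) k ∧
    (listRamsey (matchingGraph r) k : ℝ) ≤ 2 * r + 42 * (r : ℝ) ^ ((k : ℝ) / (k + 1)) := by
  have hr0 : (0 : ℝ) < r := by exact_mod_cast hr
  set x : ℝ := (r : ℝ) ^ ((k : ℝ) + 1)⁻¹ with hx
  have hxr : x ^ (k + 1) = r := by
    rw [hx, ← Nat.cast_add_one]
    exact Real.rpow_inv_natCast_pow hr0.le k.succ_ne_zero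
  have hxk : x ^ k = (r : ℝ) ^ ((k : ℝ) / (k + 1)) := by
    rw [hx, ← Real.rpow_mul_natCast hr0.le, inv_mul_eq_div]
  have hx_ge : 7.3 ≤ x := by
    calc (7.3 : ℝ) ≤ Real.exp 1 ^ 2 := by nlinarith [Real.exp_one_gt_d9]
      _ = Real.exp 2 := by rw [← Real.exp_nat_mul]; norm_num
      _ ≤ x := by
        rw [hx, Real.rpow_def_of_pos hr0, Real.exp_le_exp, ← div_eq_mul_inv,
          le_div_iff₀ (by positivity)]
        exact h
  obtain ⟨n, hn, hforced⟩ := exists_forcedByLists_matchingGraph hk.ne' hx_ge hxr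
  constructor
  · simpa using hforced.card_le_listRamsey hk.ne'
  · rw [← hxk]
    exact (Nat.cast_le.2 hforced.listRamsey_le).trans hn
end

section
/- For every fixed integer r ≥ 2, R_ℓ(rK_2, k) = Θ(k/log k) as k → ∞; that is, there exist real constants C_1, C_2 > 0 and an integer k_0 such that for all integers k ≥ k_0, C_1·k/log k ≤ R_ℓ(rK_2, k) ≤ C_2·k/log k. -/
open Finset SimpleGraph

/-! A graph without a matching of size `r` has a vertex cover with fewer than `2r` vertices, whereas
a matching of size `2` has no vertex cover by a single vertex. So colourings from the lists with no
monochromatic `rK₂` essentially correspond to assignments of few centres to each colour such that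
every edge contains a centre of some colour in its list.

Lower bound: if each colour gets one uniformly random centre, a fixed edge is missed with
probability `(1 - 2/n)ᵏ`, so a suitable choice of centres exists as soon as
`(n choose 2) (1 - 2/n)ᵏ < 1`, in particular if `n log n < k`.

Upper bound: let the lists be random `k`-subsets of a set of `2k` colours, and let `n` be a large
multiple of `k / log k`. For a fixed choice of `2r` centres per colour, at least half of the
vertices are centres of `O(k / n)` colours, a small multiple of `log k`, and an edge between two
such vertices is missed with probability at least `k ^ (-1/2)`. All these edges are hit with
probability `exp (-Ω(n² k ^ (-1/2)))`, which beats the `n ^ (4rk)` choices of centres. -/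

section Matching

variable {V : Type*} {G : SimpleGraph V} {r : ℕ}

lemma matchingGraph_isContained_of_forall_adj {f : Fin (2 * r) → V} (hf : f.Injective)
    (hadj : ∀ i (hi : i < r), G.Adj (f ⟨2 * i, by omega⟩) (f ⟨2 * i + 1, by omega⟩)) :
    matchingGraph r ⊑ G := by
  have adj_of_rel : ∀ a b : Fin (2 * r), (b : ℕ) = a + 1 ∧ (a : ℕ) % 2 = 0 →
      G.Adj (f a) (f b) := by
    rintro a b ⟨hb, ha⟩
    convert hadj (a / 2) (by omega) <;> omega
  refine ⟨⟨⟨f, fun {a b} hab => ?_⟩, hf⟩⟩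
  rcases ((fromRel_adj _ a b).mp hab).2 with h | h
  · exact adj_of_rel a b h
  · exact (adj_of_rel b a h).symm

lemma matchingGraph_succ_isContained (f : Copy (matchingGraph r) G) {u v : V} (huv : G.Adj u v)
    (hu : u ∉ Set.range f) (hv : v ∉ Set.range f) : matchingGraph (r + 1) ⊑ G := by
  have hinj : Function.Injective (Fin.snoc (Fin.snoc f u : Fin (2 * r + 1) → V) v :
      Fin (2 * r + 2) → V) := by
    refine Fin.snoc_injective_iff.mpr ⟨Fin.snoc_injective_iff.mpr ⟨f.injective, hu⟩, ?_⟩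
    simpa [Fin.range_snoc, huv.ne'] using hv
  refine matchingGraph_isContained_of_forall_adj hinj fun i hi => ?_
  rcases Nat.lt_succ_iff_lt_or_eq.mp hi with hlt | rfl
  · have h₀ : 2 * i < 2 * r := by omega
    have h₁ : 2 * i + 1 < 2 * r := by omega
    have hadj : (matchingGraph r).Adj ⟨2 * i, h₀⟩ ⟨2 * i + 1, h₁⟩ := by simp [matchingGraph]
    simpa [Fin.snoc, h₀, h₁, h₀.trans (Nat.lt_succ_self _)] using f.toHom.map_adj hadj
  · simpa [Fin.snoc] using huv

lemma exists_isVertexCover_of_not_isContained (h : ¬ matchingGraph r ⊑ G) :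
    ∃ S : Finset V, #S < 2 * r ∧ G.IsVertexCover S := by
  classical
  induction r with
  | zero => exact absurd (matchingGraph_isContained_of_forall_adj
      (Function.injective_of_subsingleton fun i : Fin 0 => i.elim0) (by simp)) h
  | succ r ih =>
    by_cases hr : matchingGraph r ⊑ G
    · obtain ⟨f⟩ := hr
      refine ⟨univ.image f, card_image_le.trans_lt (by simp), fun u v huv => ?_⟩
      by_contra! hout
      exact h (matchingGraph_succ_isContained f huv (by simpa using hout.1) (by simpa using hout.2))
    · obtain ⟨S, hS, hcover⟩ := ih hr
      exact ⟨S, by omega, hcover⟩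

lemma not_isVertexCover_matchingGraph_of_subsingleton (hr : 2 ≤ r) {C : Set (Fin (2 * r))}
    (hC : C.Subsingleton) : ¬ (matchingGraph r).IsVertexCover C := by
  intro hcover
  have h₀₁ := @hcover ⟨0, by omega⟩ ⟨1, by omega⟩ (by simp [matchingGraph])
  have h₂₃ := @hcover ⟨2, by omega⟩ ⟨3, by omega⟩ (by simp [matchingGraph])
  rcases h₀₁ with h | h <;> rcases h₂₃ with h' | h' <;> simpa using hC h h'

end Matching

section ListColoring

variable {V α β γ : Type*}

/-- The graph of all edges which receive the colour `x` under `c`. Colours of loops are ignored. -/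
def edgeColorClass (c : Sym2 V → β) (x : β) : SimpleGraph V :=
  fromEdgeSet (c ⁻¹' {x})

/-- The edge colouring `c` of the complete graph picks the colour of each edge from its list.
As in `listRamsey`, colours of loops are unconstrained. -/
def IsListColoring (L : Sym2 V → Finset β) (c : Sym2 V → β) : Prop :=
  ∀ e : Sym2 V, ¬ e.IsDiag → c e ∈ L e

/-- The lists `L` force a monochromatic copy of `G`: every colouring from them contains one. -/
def ForcesMonoCopy (G : SimpleGraph α) {n : ℕ} (L : Sym2 (Fin n) → Finset β) : Prop :=
  ∀ c, IsListColoring L c → HasMonoCopy G c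

/-- The sets `S x` of centres of the colours `x` serve the lists `L`: every edge contains a centre
of some colour in its list. -/
def AreCentres (L : Sym2 V → Finset β) (S : β → Set V) : Prop :=
  ∀ e : Sym2 V, ¬ e.IsDiag → ∃ x ∈ L e, ∃ v ∈ S x, v ∈ e

lemma hasMonoCopy_iff_exists_isContained {G : SimpleGraph α} {n : ℕ} {c : Sym2 (Fin n) → β} :
    HasMonoCopy G c ↔ ∃ x, G ⊑ edgeColorClass c x := by
  constructor
  · rintro ⟨f, x, hf, hfx⟩
    exact ⟨x, ⟨⟨⟨f, fun {a b} hab => by simp [edgeColorClass, hfx a b hab, hf.eq_iff, hab.ne]⟩,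
      hf⟩⟩⟩
  · rintro ⟨x, ⟨f⟩⟩
    refine ⟨f, x, f.injective, fun a b hab => ?_⟩
    simpa using ((fromEdgeSet_adj _).mp (f.toHom.map_adj hab)).1

lemma areCentres_iff_exists_isListColoring [Nonempty β] {L : Sym2 V → Finset β}
    {S : β → Set V} :
    AreCentres L S ↔ ∃ c, IsListColoring L c ∧ ∀ x, (edgeColorClass c x).IsVertexCover (S x) := by
  constructor
  · intro h
    choose! c hcL v hvS hve using h
    refine ⟨c, hcL, fun x u w huw => ?_⟩
    obtain ⟨hcx, hne⟩ := (fromEdgeSet_adj _).mp huw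
    rw [← (hcx : c s(u, w) = x)]
    have hdiag : ¬ s(u, w).IsDiag := by simpa using hne
    rcases Sym2.mem_iff.mp (hve _ hdiag) with h | h
    · exact Or.inl (by simpa only [h] using hvS _ hdiag)
    · exact Or.inr (by simpa only [h] using hvS _ hdiag)
  · rintro ⟨c, hcL, hcover⟩ e hdiag
    refine ⟨c e, hcL e hdiag, ?_⟩
    induction e using Sym2.inductionOn with
    | _ u w =>
      have hadj : (edgeColorClass c (c s(u, w))).Adj u w := by simpa [edgeColorClass] using hdiag
      rcases hcover _ hadj with h | h
      · exact ⟨u, h, Sym2.mem_mk_left u w⟩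
      · exact ⟨w, h, Sym2.mem_mk_right u w⟩

lemma areCentres_map_iff {L : Sym2 V → Finset β} {φ : β ↪ γ} {S : γ → Set V} :
    AreCentres (fun e => (L e).map φ) S ↔ AreCentres L (S ∘ φ) := by
  simp [AreCentres]

lemma AreCentres.mono {L : Sym2 V → Finset β} {S T : β → Set V} (hS : AreCentres L S)
    (hST : ∀ x, S x ⊆ T x) : AreCentres L T := by
  intro e he
  obtain ⟨x, hx, v, hv, hve⟩ := hS e he
  exact ⟨x, hx, v, hST x hv, hve⟩

lemma forcesMonoCopy_matchingGraph [Nonempty β] {n r : ℕ} (hrn : 2 * r ≤ n)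
    {L : Sym2 (Fin n) → Finset β}
    (hL : ∀ S : β → Finset (Fin n), (∀ x, #(S x) = 2 * r) → ¬ AreCentres L fun x => S x) :
    ForcesMonoCopy (matchingGraph r) L := by
  intro c hc
  by_contra hmono
  rw [hasMonoCopy_iff_exists_isContained, not_exists] at hmono
  choose S hcard hcover using fun x => exists_isVertexCover_of_not_isContained (hmono x)
  choose T hST hT using fun x => exists_superset_card_eq (hcard x).le (by simpa using hrn)
  exact hL T hT ((areCentres_iff_exists_isListColoring.mpr ⟨c, hc, hcover⟩).mono hST)

lemma AreCentres.not_forcesMonoCopy [Nonempty β] {n : ℕ} {L : Sym2 (Fin n) → Finset β}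
    {S : β → Set (Fin n)} (hS : AreCentres L S) (hsub : ∀ x, (S x).Subsingleton)
    {G : SimpleGraph α} (hG : ∀ C : Set α, C.Subsingleton → ¬ G.IsVertexCover C) :
    ¬ ForcesMonoCopy G L := by
  intro hL
  obtain ⟨c, hc, hcover⟩ := areCentres_iff_exists_isListColoring.mp hS
  obtain ⟨x, ⟨f⟩⟩ := hasMonoCopy_iff_exists_isContained.mp (hL c hc)
  exact hG _ ((hsub x).preimage f.injective) ((hcover x).preimage f.toHom)

lemma listRamsey_le {G : SimpleGraph α} {k n : ℕ} {L : Sym2 (Fin n) → Finset ℕ}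
    (hcard : ∀ e : Sym2 (Fin n), ¬ e.IsDiag → #(L e) = k) (hL : ForcesMonoCopy G L) :
    listRamsey G k ≤ n :=
  Nat.sInf_le ⟨L, hcard, hL⟩

/-- Without a list assignment forcing `G`, the infimum in `listRamsey` has the junk value `0`. -/
lemma exists_forcesMonoCopy_listRamsey {G : SimpleGraph α} {k n : ℕ}
    {L : Sym2 (Fin n) → Finset ℕ} (hcard : ∀ e : Sym2 (Fin n), ¬ e.IsDiag → #(L e) = k)
    (hL : ForcesMonoCopy G L) :
    ∃ L : Sym2 (Fin (listRamsey G k)) → Finset ℕ,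
      (∀ e : Sym2 (Fin (listRamsey G k)), ¬ e.IsDiag → #(L e) = k) ∧ ForcesMonoCopy G L :=
  Nat.sInf_mem (s := {n | ∃ L : Sym2 (Fin n) → Finset ℕ,
    (∀ e : Sym2 (Fin n), ¬ e.IsDiag → #(L e) = k) ∧ ForcesMonoCopy G L}) ⟨n, L, hcard, hL⟩

end ListColoring

section UnionBound

variable {ι κ α : Type*}

lemma prod_card_piecewise_le [DecidableEq ι] {P Q : ι → Finset α} {I E : Finset ι} (hE : E ⊆ I)
    {q : ℝ} (hQ : ∀ i ∈ E, (#(Q i) : ℝ) ≤ q * #(P i)) :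
    (∏ i ∈ I, #(E.piecewise Q P i) : ℝ) ≤ q ^ #E * ∏ i ∈ I, (#(P i) : ℝ) := by
  calc (∏ i ∈ I, #(E.piecewise Q P i) : ℝ)
      ≤ ∏ i ∈ I, (if i ∈ E then q else 1) * (#(P i) : ℝ) := by
        refine prod_le_prod (fun _ _ => by positivity) fun i _ => ?_
        by_cases hi : i ∈ E
        · simpa [hi] using hQ i hi
        · simp [hi]
    _ = q ^ #E * ∏ i ∈ I, (#(P i) : ℝ) := by
        rw [prod_mul_distrib, Finset.prod_ite_mem, inter_eq_right.mpr hE, prod_const]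

/-- The union bound: if the `f i` are chosen from the `P i` independently and uniformly, then for
each `j` all of the at least `m` events `f i ∈ Q j i` with `i ∈ E j` occur with probability at most
`q ^ m`. -/
lemma exists_choice_forall_exists_notMem (J : Finset κ) {P : ι → Finset α}
    (hP : ∀ i, (P i).Nonempty) {E : κ → Finset ι} {Q : κ → ι → Finset α} {q : ℝ} {m : ℕ}
    (hq₀ : 0 ≤ q) (hq₁ : q ≤ 1) (hm : ∀ j ∈ J, m ≤ #(E j))
    (hQ : ∀ j ∈ J, ∀ i ∈ E j, (#(Q j i) : ℝ) ≤ q * #(P i)) (hJ : #J * q ^ m < 1) :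
    ∃ f : ι → α, (∀ i, f i ∈ P i) ∧ ∀ j ∈ J, ∃ i ∈ E j, f i ∉ Q j i := by
  classical
  set I : Finset ι := J.biUnion E
  have hEI : ∀ j ∈ J, E j ⊆ I := fun j hj => subset_biUnion_of_mem E hj
  set bad : κ → Finset (∀ i ∈ I, α) := fun j => I.pi ((E j).piecewise (Q j) P)
  have hpos : (0 : ℝ) < #(I.pi P) := by
    exact_mod_cast card_pos.mpr (pi_nonempty.mpr fun i _ => hP i)
  have card_bad_le : ∀ j ∈ J, (#(bad j) : ℝ) ≤ q ^ m * #(I.pi P) := by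
    intro j hj
    rw [card_pi, card_pi]
    push_cast
    refine (prod_card_piecewise_le (hEI j hj) (hQ j hj)).trans ?_
    gcongr ?_ * _
    exact pow_le_pow_of_le_one hq₀ hq₁ (hm j hj)
  have card_biUnion_bad_lt : #(J.biUnion bad) < #(I.pi P) := by
    suffices (#(J.biUnion bad) : ℝ) < #(I.pi P) by exact_mod_cast this
    calc (#(J.biUnion bad) : ℝ) ≤ ∑ j ∈ J, (#(bad j) : ℝ) := by exact_mod_cast card_biUnion_le
      _ ≤ #J * (q ^ m * #(I.pi P)) := by simpa using sum_le_card_nsmul J _ _ card_bad_le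
      _ < #(I.pi P) := by nlinarith
  obtain ⟨g, hg, hgood⟩ := exists_mem_notMem_of_card_lt_card card_biUnion_bad_lt
  rw [mem_pi] at hg
  refine ⟨fun i => if hi : i ∈ I then g i hi else (hP i).choose, fun i => ?_, fun j hj => ?_⟩
  · by_cases hi : i ∈ I
    · simpa [hi] using hg i hi
    · simpa [hi] using (hP i).choose_spec
  · by_contra! hbad
    refine hgood (mem_biUnion.mpr ⟨j, hj, mem_pi.mpr fun i hi => ?_⟩)
    by_cases hiE : i ∈ E j
    · simpa [hi, hiE] using hbad i hiE
    · simpa [hiE] using hg i hi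

end UnionBound

section LowerBound

lemma exists_areCentres_subsingleton {V β : Type*} [Fintype V] {k : ℕ} {L : Sym2 V → Finset β}
    (hL : ∀ e : Sym2 V, ¬ e.IsDiag → k ≤ #(L e))
    (hlt : ((Fintype.card V).choose 2 : ℝ) * (1 - 2 / Fintype.card V) ^ k < 1) :
    ∃ S : β → Set V, (∀ x, (S x).Subsingleton) ∧ AreCentres L S := by
  classical
  rcases subsingleton_or_nontrivial V with hV | hV
  · refine ⟨fun _ => Set.univ, fun _ => Set.subsingleton_univ, fun e he => absurd ?_ he⟩
    induction e using Sym2.inductionOn with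
    | _ u v => exact Sym2.mk_isDiag_iff.mpr (Subsingleton.elim u v)
  have hcard : 2 ≤ Fintype.card V := Fintype.one_lt_card
  have hcard' : (2 : ℝ) ≤ Fintype.card V := by exact_mod_cast hcard
  have hmem : ∀ e : Sym2 V, e ∈ (⊤ : SimpleGraph V).edgeFinset ↔ ¬ e.IsDiag := by simp
  have card_avoiding : ∀ e ∈ (⊤ : SimpleGraph V).edgeFinset,
      (#{v | v ∉ e} : ℝ) ≤ (1 - 2 / Fintype.card V) * #(univ : Finset V) := by
    intro e he
    rw [hmem] at he
    induction e using Sym2.inductionOn with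
    | _ u v =>
      have : ({w | w ∉ s(u, v)} : Finset V) = {u, v}ᶜ := by ext; simp
      rw [this, card_compl, card_pair (by simpa using he), card_univ, Nat.cast_sub hcard,
        sub_mul, div_mul_cancel₀ _ (by positivity), one_mul, Nat.cast_two]
  obtain ⟨g, -, hg⟩ := exists_choice_forall_exists_notMem (ι := β)
    (⊤ : SimpleGraph V).edgeFinset (fun _ => univ_nonempty) (E := L) (m := k)
    (sub_nonneg.mpr (div_le_one_of_le₀ hcard' (by positivity)))
    (sub_le_self 1 (by positivity)) (fun e he => hL e ((hmem e).mp he))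
    (fun e he _ _ => card_avoiding e he) (by rwa [card_edgeFinset_top_eq_card_choose_two])
  refine ⟨fun x => {g x}, fun x => Set.subsingleton_singleton, fun e he => ?_⟩
  obtain ⟨x, hx, hgx⟩ := hg e ((hmem e).mpr he)
  exact ⟨x, hx, g x, rfl, by simpa using hgx⟩

lemma le_mul_log_of_one_le_choose_two_mul {k n : ℕ}
    (h : 1 ≤ (n.choose 2 : ℝ) * (1 - 2 / n) ^ k) : (k : ℝ) ≤ n * Real.log n := by
  have hn : 2 ≤ n := by
    by_contra! hlt
    norm_num [Nat.choose_eq_zero_of_lt hlt] at h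
  have hn' : (2 : ℝ) ≤ n := by exact_mod_cast hn
  have hchoose : (n.choose 2 : ℝ) ≤ (n : ℝ) ^ 2 := by exact_mod_cast Nat.choose_le_pow n 2
  have hpow : (1 - 2 / n : ℝ) ^ k ≤ Real.exp (-(2 * k / n)) := by
    calc (1 - 2 / n : ℝ) ^ k ≤ Real.exp (-(2 / n)) ^ k :=
          pow_le_pow_left₀ (sub_nonneg.mpr (div_le_one_of_le₀ hn' (by positivity)))
            (Real.one_sub_le_exp_neg _) k
      _ = Real.exp (-(2 * k / n)) := by rw [← Real.exp_nat_mul]; congr 1; ring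
  have hexp : 1 ≤ Real.exp (2 * Real.log n - 2 * k / n) := by
    calc (1 : ℝ) ≤ n.choose 2 * (1 - 2 / n) ^ k := h
      _ ≤ (n : ℝ) ^ 2 * Real.exp (-(2 * k / n)) :=
          mul_le_mul hchoose hpow (pow_nonneg (sub_nonneg.mpr
            (div_le_one_of_le₀ hn' (by positivity))) _) (by positivity)
      _ = Real.exp (2 * Real.log n - 2 * k / n) := by
          rw [sub_eq_add_neg, Real.exp_add, two_mul (Real.log n), Real.exp_add,
            Real.exp_log (by positivity), sq]
  have hlog : 2 * k / n ≤ 2 * Real.log n := sub_nonneg.mp (Real.one_le_exp_iff.mp hexp)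
  rw [div_le_iff₀ (by positivity)] at hlog
  linarith

lemma div_log_le_of_le_mul_log {x y : ℝ} (hx : 1 ≤ Real.log x) (hy : 0 < y)
    (h : x ≤ y * Real.log y) : x / Real.log x ≤ y := by
  rw [div_le_iff₀ (by linarith)]
  rcases le_total y x with hyx | hxy
  · exact h.trans (by gcongr)
  · exact hxy.trans (le_mul_of_one_le_right hy.le hx)

theorem div_log_le_of_forcesMonoCopy {α β : Type*} [Nonempty β] {G : SimpleGraph α}
    (hG : ∀ C : Set α, C.Subsingleton → ¬ G.IsVertexCover C) {k n : ℕ} (hk : 1 ≤ Real.log k)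
    {L : Sym2 (Fin n) → Finset β} (hcard : ∀ e : Sym2 (Fin n), ¬ e.IsDiag → k ≤ #(L e))
    (hL : ForcesMonoCopy G L) : k / Real.log k ≤ (n : ℝ) := by
  have hchoose : 1 ≤ (n.choose 2 : ℝ) * (1 - 2 / n) ^ k := by
    by_contra! hlt
    obtain ⟨S, hsub, hS⟩ := exists_areCentres_subsingleton hcard (by simpa using hlt)
    exact hS.not_forcesMonoCopy hsub hG hL
  have hn : 0 < n := by
    rw [pos_iff_ne_zero]
    rintro rfl
    norm_num at hchoose
  exact div_log_le_of_le_mul_log hk (by exact_mod_cast hn)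
    (le_mul_log_of_one_le_choose_two_mul hchoose)

end LowerBound

section UpperBound

lemma choose_add_le_pow_mul_choose {c k M : ℕ} (h : (c + 1) * k ≤ c * (M + 1)) (a : ℕ) :
    (M + a).choose k ≤ (c + 1) ^ a * M.choose k := by
  induction a with
  | zero => simp
  | succ a ih =>
    have hstep : (M + a + 1).choose k ≤ (c + 1) * (M + a).choose k := by
      have hle : M + a + 1 ≤ (c + 1) * (M + a + 1 - k) := by
        rw [Nat.mul_sub]
        have : c * (M + 1) ≤ c * (M + a + 1) := by gcongr; omega
        have : (c + 1) * (M + a + 1) = c * (M + a + 1) + (M + a + 1) := by ring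
        omega
      refine Nat.le_of_mul_le_mul_right ?_ (Nat.succ_pos (M + a))
      calc (M + a + 1).choose k * (M + a + 1)
          ≤ (M + a + 1).choose k * ((c + 1) * (M + a + 1 - k)) := by gcongr
        _ = (c + 1) * (M + a).choose k * (M + a + 1) := by
            rw [mul_assoc (c + 1), Nat.choose_mul_succ_eq]; ring
    calc (M + (a + 1)).choose k ≤ (c + 1) * (M + a).choose k := hstep
      _ ≤ (c + 1) * ((c + 1) ^ a * M.choose k) := by gcongr
      _ = (c + 1) ^ (a + 1) * M.choose k := by ring

lemma card_powersetCard_filter_not_disjoint_le {β : Type*} [DecidableEq β] {U A : Finset β}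
    (hAU : A ⊆ U) {c k : ℕ} (h : (c + 1) * k ≤ c * (#(U \ A) + 1)) :
    (#{B ∈ U.powersetCard k | ¬ Disjoint B A} : ℝ) ≤
      (1 - (1 / (c + 1)) ^ #A) * #(U.powersetCard k) := by
  have hdisj : {B ∈ U.powersetCard k | Disjoint B A} = (U \ A).powersetCard k := by
    ext B
    simp only [mem_filter, mem_powersetCard, subset_sdiff]
    tauto
  have hsplit : (#{B ∈ U.powersetCard k | Disjoint B A} : ℝ) +
      #{B ∈ U.powersetCard k | ¬ Disjoint B A} = #(U.powersetCard k) := by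
    exact_mod_cast card_filter_add_card_filter_not (s := U.powersetCard k) (Disjoint · A)
  have hchoose : (#(U.powersetCard k) : ℝ) ≤ (c + 1) ^ #A * #((U \ A).powersetCard k) := by
    have := choose_add_le_pow_mul_choose h #A
    rw [card_sdiff_add_card_eq_card hAU] at this
    simpa only [card_powersetCard] using (by exact_mod_cast this)
  have hprop : (1 / (c + 1) : ℝ) ^ #A * #(U.powersetCard k) ≤ #((U \ A).powersetCard k) := by
    rw [one_div, inv_pow, inv_mul_le_iff₀ (by positivity)]
    exact hchoose
  rw [hdisj] at hsplit
  linarith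

section LightVertices

variable {V β : Type*} [Fintype V] [Fintype β] [DecidableEq V] {S : β → Finset V} {s t : ℕ}

/-- The vertices which are centres of at most `t` colours, where `S x` is the set of centres of the
colour `x`. -/
def lightVertices (S : β → Finset V) (t : ℕ) : Finset V :=
  {v | #{x | v ∈ S x} ≤ t}

/-- The edges, without loops, between two vertices of `lightVertices S t`. -/
def lightEdges (S : β → Finset V) (t : ℕ) : Finset (Sym2 V) :=
  (lightVertices S t).offDiag.image Sym2.mk.uncurry

lemma not_isDiag_of_mem_lightEdges {e : Sym2 V} (he : e ∈ lightEdges S t) :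
    ¬ e.IsDiag := by
  obtain ⟨⟨u, v⟩, huv, rfl⟩ := mem_image.mp he
  simpa using (mem_offDiag.mp huv).2.2

/-- Double counting of the pairs `(v, x)` with `v ∈ S x`. -/
lemma card_le_two_mul_card_lightVertices (hS : ∀ x, #(S x) ≤ s)
    (hst : 2 * (Fintype.card β * s) ≤ Fintype.card V * (t + 1)) :
    Fintype.card V ≤ 2 * #(lightVertices S t) := by
  have hheavy : #{v | ¬ #{x | v ∈ S x} ≤ t} * (t + 1) ≤ Fintype.card β * s := by
    refine card_mul_le_card_mul (t := univ) (fun v x => v ∈ S x) (fun v hv => ?_) fun x _ => ?_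
    · exact not_le.mp (mem_filter.mp hv).2
    · exact (card_le_card fun v hv => (mem_filter.mp hv).2).trans (hS x)
  have hsplit : #(lightVertices S t) + #{v | ¬ #{x | v ∈ S x} ≤ t} = Fintype.card V :=
    card_filter_add_card_filter_not _
  have hhalf : 2 * #{v | ¬ #{x | v ∈ S x} ≤ t} ≤ Fintype.card V :=
    Nat.le_of_mul_le_mul_right (by linarith) (Nat.succ_pos t)
  omega

lemma choose_two_le_card_lightEdges (hS : ∀ x, #(S x) ≤ s)
    (hst : 2 * (Fintype.card β * s) ≤ Fintype.card V * (t + 1)) :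
    (Fintype.card V / 2).choose 2 ≤ #(lightEdges S t) := by
  rw [lightEdges, Sym2.card_image_offDiag]
  have := card_le_two_mul_card_lightVertices hS hst
  exact Nat.choose_le_choose 2 (by omega)

lemma card_powersetCard_filter_hit_le {k : ℕ} (hβ : Fintype.card β = 2 * k)
    (htk : 4 * t ≤ k) {e : Sym2 V} (he : e ∈ lightEdges S t) :
    (#{B ∈ univ.powersetCard k | ∃ x ∈ B, ∃ w ∈ S x, w ∈ e} : ℝ) ≤
      (1 - (1 / 9) ^ t) * #((univ : Finset β).powersetCard k) := by
  classical
  obtain ⟨⟨u, v⟩, huv, rfl⟩ := mem_image.mp he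
  obtain ⟨hu, hv, -⟩ := mem_offDiag.mp huv
  set A : Finset β := ({x | u ∈ S x} : Finset β) ∪ ({x | v ∈ S x} : Finset β) with hA
  have hmem : ∀ x, x ∈ A ↔ u ∈ S x ∨ v ∈ S x := by simp [hA]
  have hAcard : #A ≤ 2 * t :=
    (card_union_le _ _).trans (by linarith [(mem_filter.mp hu).2, (mem_filter.mp hv).2])
  have hhit : ∀ B : Finset β, (∃ x ∈ B, ∃ w ∈ S x, w ∈ s(u, v)) ↔ ¬ Disjoint B A := by
    intro B
    simp [not_disjoint_iff, hmem, and_or_left, exists_or]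
  have hsdiff : #(univ \ A) = 2 * k - #A := by rw [card_univ_sdiff, hβ]
  calc (#{B ∈ univ.powersetCard k | ∃ x ∈ B, ∃ w ∈ S x, w ∈ s(u, v)} : ℝ)
      ≤ (1 - (1 / ((2 : ℕ) + 1)) ^ #A) * #((univ : Finset β).powersetCard k) := by
        simp only [hhit]
        exact card_powersetCard_filter_not_disjoint_le (subset_univ A) (by omega)
    _ ≤ (1 - (1 / ((2 : ℕ) + 1)) ^ (2 * t)) * #((univ : Finset β).powersetCard k) := by
        gcongr ?_ * _
        exact sub_le_sub_left (pow_le_pow_of_le_one (by norm_num) (by norm_num) hAcard) 1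
    _ = (1 - (1 / 9) ^ t) * #((univ : Finset β).powersetCard k) := by rw [pow_mul]; norm_num

end LightVertices

theorem exists_lists_forall_not_areCentres {V β : Type*} [Fintype V] [Fintype β] {k s t : ℕ}
    (hβ : Fintype.card β = 2 * k) (hst : 4 * k * s ≤ Fintype.card V * (t + 1)) (htk : 4 * t ≤ k)
    (hlt : (Fintype.card V : ℝ) ^ (2 * k * s) *
      (1 - (1 / 9) ^ t) ^ (Fintype.card V / 2).choose 2 < 1) :
    ∃ L : Sym2 V → Finset β, (∀ e, #(L e) = k) ∧
      ∀ S : β → Finset V, (∀ x, #(S x) = s) → ¬ AreCentres L fun x => S x := by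
  classical
  set J : Finset (β → Finset V) := Fintype.piFinset fun _ => univ.powersetCard s with hJ
  have hmem : ∀ S, S ∈ J ↔ ∀ x, #(S x) = s := by simp [hJ]
  have hJcard : (#J : ℝ) ≤ (Fintype.card V : ℝ) ^ (2 * k * s) := by
    rw [hJ, Fintype.card_piFinset, prod_const, card_powersetCard, card_univ, card_univ, hβ,
      mul_comm (2 * k) s, pow_mul _ s]
    exact_mod_cast Nat.pow_le_pow_left (Nat.choose_le_pow _ s) _
  have hq : (0 : ℝ) ≤ 1 - (1 / 9) ^ t :=
    sub_nonneg.mpr (pow_le_one₀ (by norm_num) (by norm_num))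
  obtain ⟨L, hL, hmiss⟩ := exists_choice_forall_exists_notMem J
    (P := fun _ : Sym2 V => (univ : Finset β).powersetCard k) (E := fun S => lightEdges S t)
    (Q := fun S e => {B ∈ univ.powersetCard k | ∃ x ∈ B, ∃ w ∈ S x, w ∈ e})
    (fun _ => powersetCard_nonempty.mpr (by rw [card_univ]; omega))
    hq (sub_le_self 1 (by positivity))
    (fun S hS => choose_two_le_card_lightEdges (fun x => ((hmem S).mp hS x).le)
      (by rw [hβ]; linarith))
    (fun S _ e he => card_powersetCard_filter_hit_le hβ htk he)
    ((mul_le_mul_of_nonneg_right hJcard (pow_nonneg hq _)).trans_lt hlt)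
  refine ⟨L, fun e => (mem_powersetCard.mp (hL e)).2, fun S hS hcentres => ?_⟩
  obtain ⟨e, he, hLe⟩ := hmiss S ((hmem S).mpr hS)
  exact hLe (mem_filter.mpr ⟨hL e, hcentres e (not_isDiag_of_mem_lightEdges he)⟩)

theorem exists_forcesMonoCopy_matchingGraph {r k n t : ℕ} (hrn : 2 * r ≤ n)
    (hrt : 4 * k * (2 * r) ≤ n * (t + 1)) (htk : 4 * t ≤ k)
    (hlt : (n : ℝ) ^ (2 * k * (2 * r)) * (1 - (1 / 9) ^ t) ^ (n / 2).choose 2 < 1) :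
    ∃ L : Sym2 (Fin n) → Finset ℕ, (∀ e, #(L e) = k) ∧ ForcesMonoCopy (matchingGraph r) L := by
  obtain ⟨L, hcard, hL⟩ := exists_lists_forall_not_areCentres (V := Fin n)
    (Fintype.card_fin (2 * k)) (by simpa using hrt) htk (by simpa using hlt)
  refine ⟨fun e => (L e).map Fin.valEmbedding, by simpa using hcard,
    forcesMonoCopy_matchingGraph hrn fun S hS hcentres => ?_⟩
  exact hL _ (fun x => hS x) (areCentres_map_iff.mp hcentres)

lemma pow_mul_one_sub_pow_lt_one {x p : ℝ} {a b : ℕ} (hx : 0 < x) (hp : p ≤ 1)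
    (h : a * Real.log x < p * b) : x ^ a * (1 - p) ^ b < 1 := by
  calc x ^ a * (1 - p) ^ b ≤ Real.exp (Real.log x) ^ a * Real.exp (-p) ^ b := by
        rw [Real.exp_log hx]
        gcongr
        exact Real.one_sub_le_exp_neg p
    _ = Real.exp (a * Real.log x - p * b) := by
        rw [← Real.exp_nat_mul, ← Real.exp_nat_mul, ← Real.exp_add]; congr 1; ring
    _ < 1 := Real.exp_lt_one_iff.mpr (by linarith)

lemma inv_sqrt_le_one_div_nine_pow {x : ℝ} (hx : 0 < x) {t : ℕ} (ht : t ≤ Real.log x / 8) :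
    (√x)⁻¹ ≤ (1 / 9) ^ t := by
  have hexp : (9 : ℝ) ≤ Real.exp 4 := by
    have : (2 : ℝ) ^ 4 ≤ Real.exp 1 ^ 4 := by
      gcongr; linarith [Real.add_one_le_exp (1 : ℝ)]
    rw [← Real.exp_nat_mul] at this
    norm_num at this
    linarith
  rw [one_div, inv_pow]
  refine inv_anti₀ (by positivity) ?_
  calc (9 : ℝ) ^ t ≤ Real.exp 4 ^ t := by gcongr
    _ = Real.exp (t * 4) := (Real.exp_nat_mul 4 t).symm
    _ ≤ Real.exp (Real.log x / 2) := Real.exp_le_exp.mpr (by linarith)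
    _ = √x := by rw [Real.exp_half, Real.exp_log hx]

lemma sq_div_le_choose_two_half {n : ℕ} (hn : 8 ≤ n) :
    (n : ℝ) ^ 2 / 32 ≤ ((n / 2).choose 2 : ℝ) := by
  have hn' : (8 : ℝ) ≤ n := by exact_mod_cast hn
  have hhalf : (n : ℝ) ≤ 2 * (n / 2 : ℕ) + 1 := by exact_mod_cast (by omega : n ≤ 2 * (n / 2) + 1)
  rw [Nat.cast_choose_two]
  nlinarith

/-- The left-hand side is at most `4 k s log k`, the right-hand side at least
`32 s² k ^ (3/2) / (log k)²`. -/
lemma mul_log_lt_one_div_nine_pow_mul_choose {s k n t : ℕ} (hs : 0 < s) (hlog : 1 ≤ Real.log k)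
    (hpow : Real.log k ^ 6 < k) (hn : 8 ≤ n) (hnk : n ≤ k ^ 2)
    (hsn : 32 * s * (k / Real.log k) ≤ n) (ht : t ≤ Real.log k / 8) :
    (2 * k * s : ℕ) * Real.log n < (1 / 9 : ℝ) ^ t * (n / 2).choose 2 := by
  have hk : (0 : ℝ) < k := lt_of_le_of_lt (by positivity) hpow
  have hs' : (1 : ℝ) ≤ s := by exact_mod_cast hs
  have hlogn : Real.log n ≤ 2 * Real.log k := by
    have : Real.log n ≤ Real.log ((k : ℝ) ^ 2) :=
      Real.log_le_log (by positivity) (by exact_mod_cast hnk)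
    simpa using this
  have hsqrt : Real.log k ^ 3 < √k := by
    rw [Real.lt_sqrt (by positivity), ← pow_mul]
    exact hpow
  set l := Real.log k
  calc (2 * k * s : ℕ) * Real.log n ≤ 2 * k * s * (2 * l) := by push_cast; gcongr
    _ < (√k)⁻¹ * ((32 * s * (k / l)) ^ 2 / 32) := by
        have : (√k)⁻¹ * ((32 * s * (k / l)) ^ 2 / 32) = 32 * s ^ 2 * k * √k / l ^ 2 := by
          nth_rewrite 2 [← Real.mul_self_sqrt hk.le]
          nth_rewrite 3 [← Real.mul_self_sqrt hk.le]
          field_simp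
          norm_num
        rw [this, lt_div_iff₀ (by positivity)]
        calc 2 * k * s * (2 * l) * l ^ 2 = 4 * k * s * l ^ 3 := by ring
          _ < 4 * k * s * √k := by gcongr
          _ ≤ 32 * s ^ 2 * k * √k := by
              have : 4 * (s : ℝ) ≤ 32 * s ^ 2 := by nlinarith
              nlinarith [mul_le_mul_of_nonneg_right this (by positivity : 0 ≤ k * √k)]
    _ ≤ (1 / 9 : ℝ) ^ t * ((n : ℝ) ^ 2 / 32) := by
        gcongr
        exact inv_sqrt_le_one_div_nine_pow hk ht
    _ ≤ (1 / 9 : ℝ) ^ t * (n / 2).choose 2 := by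
        gcongr
        exact sq_div_le_choose_two_half hn

/-- Here `n = ⌈32 s k / log k⌉`, and `t = ⌊4 k s / n⌋` is at most `(log k) / 8`. -/
lemma exists_order_threshold {s k : ℕ} (hs : 0 < s) (hlog : 1 ≤ Real.log k)
    (hpow : Real.log k ^ 6 < k) (hsk : 32 * s + 1 ≤ k) :
    ∃ n t : ℕ, n ≤ (32 * s + 1) * k / Real.log k ∧ s ≤ n ∧ 4 * k * s ≤ n * (t + 1) ∧ 4 * t ≤ k ∧
      (n : ℝ) ^ (2 * k * s) * (1 - (1 / 9) ^ t) ^ (n / 2).choose 2 < 1 := by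
  have hk : (0 : ℝ) < k := lt_of_le_of_lt (by positivity) hpow
  have hlog₀ : 0 < Real.log k := by linarith
  have hlogk : Real.log k ≤ k := Real.log_le_self hk.le
  have hx : 1 ≤ k / Real.log k := by rwa [one_le_div₀ hlog₀]
  obtain ⟨n, hn⟩ : ∃ n, n = ⌈32 * s * (k / Real.log k)⌉₊ := ⟨_, rfl⟩
  have hlow : 32 * s * (k / Real.log k) ≤ n := hn ▸ Nat.le_ceil _
  have hupp : n ≤ (32 * s + 1) * (k / Real.log k) := by
    have := Nat.ceil_lt_add_one (show 0 ≤ 32 * s * (k / Real.log k) by positivity)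
    rw [← hn] at this
    linarith
  have hsn : 32 * s ≤ n := by
    have : (32 * s : ℝ) ≤ n := (le_mul_of_one_le_right (by positivity) hx).trans hlow
    exact_mod_cast this
  have hnk : n ≤ k ^ 2 := by
    have hsk' : (32 * s + 1 : ℝ) ≤ k := by exact_mod_cast hsk
    have : (n : ℝ) ≤ (k : ℝ) ^ 2 := by
      rw [sq]
      exact hupp.trans (by gcongr; exact div_le_self hk.le hlog)
    exact_mod_cast this
  have hn₀ : (0 : ℝ) < n := by exact_mod_cast (by omega : 0 < n)
  obtain ⟨t, ht⟩ : ∃ t, t = 4 * k * s / n := ⟨_, rfl⟩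
  have htlog : t ≤ Real.log k / 8 := by
    have hdiv : (t : ℝ) ≤ 4 * k * s / n := by
      rw [ht]; exact_mod_cast Nat.cast_div_le (α := ℝ) (m := 4 * k * s) (n := n)
    refine hdiv.trans ?_
    rw [← mul_div_assoc, div_le_iff₀ hlog₀] at hlow
    rw [div_le_iff₀ hn₀]
    linarith
  refine ⟨n, t, by rwa [mul_div_assoc], by omega,
    ht ▸ (Nat.lt_mul_div_succ _ (by omega)).le, ?_, ?_⟩
  · have : (4 * t : ℝ) ≤ k := by linarith
    exact_mod_cast this
  · exact pow_mul_one_sub_pow_lt_one hn₀ (pow_le_one₀ (by norm_num) (by norm_num))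
      (mul_log_lt_one_div_nine_pow_mul_choose hs hlog hpow (by omega) hnk hlow htlog)

lemma eventually_one_le_log_natCast : ∀ᶠ k : ℕ in Filter.atTop, 1 ≤ Real.log k :=
  (Real.tendsto_log_atTop.comp tendsto_natCast_atTop_atTop).eventually_ge_atTop 1

lemma eventually_log_natCast_pow_lt (m : ℕ) :
    ∀ᶠ k : ℕ in Filter.atTop, Real.log k ^ m < k := by
  have hO := tendsto_natCast_atTop_atTop.eventually
    ((Real.isLittleO_pow_log_id_atTop (n := m)).def (show (0 : ℝ) < 1 / 2 by norm_num))
  filter_upwards [hO, Filter.eventually_gt_atTop 0] with k hle hk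
  have hk' : (0 : ℝ) < k := by exact_mod_cast hk
  rw [id, Real.norm_of_nonneg hk'.le] at hle
  linarith [Real.le_norm_self (Real.log k ^ m)]

theorem eventually_exists_forcesMonoCopy_matchingGraph {r : ℕ} (hr : 0 < r) :
    ∀ᶠ k : ℕ in Filter.atTop, ∃ n : ℕ, (n : ℝ) ≤ (64 * r + 1) * k / Real.log k ∧
      ∃ L : Sym2 (Fin n) → Finset ℕ, (∀ e, #(L e) = k) ∧ ForcesMonoCopy (matchingGraph r) L := by
  filter_upwards [eventually_one_le_log_natCast, eventually_log_natCast_pow_lt 6,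
    Filter.eventually_ge_atTop (32 * (2 * r) + 1)] with k hlog hpow hrk
  obtain ⟨n, t, hn, hrn, hrt, htk, hlt⟩ :=
    exists_order_threshold (s := 2 * r) (by omega) hlog hpow hrk
  refine ⟨n, hn.trans_eq ?_, exists_forcesMonoCopy_matchingGraph hrn hrt htk hlt⟩
  push_cast
  ring

end UpperBound

theorem list_ramsey_matching_asymp_k (r : ℕ) (hr : 2 ≤ r) :
    ∃ C₁ C₂ : ℝ, 0 < C₁ ∧ 0 < C₂ ∧ ∃ k₀ : ℕ, ∀ k : ℕ, k₀ ≤ k →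
      C₁ * k / Real.log k ≤ (listRamsey (matchingGraph r) k : ℝ) ∧
      (listRamsey (matchingGraph r) k : ℝ) ≤ C₂ * k / Real.log k := by
  obtain ⟨k₀, hk₀⟩ := Filter.eventually_atTop.mp (eventually_one_le_log_natCast.and
    (eventually_exists_forcesMonoCopy_matchingGraph (show 0 < r by omega)))
  refine ⟨1, 64 * r + 1, one_pos, by positivity, k₀, fun k hk => ?_⟩
  obtain ⟨hlog, n, hn, L, hcard, hL⟩ := hk₀ k hk
  constructor
  · obtain ⟨M, hMcard, hM⟩ := exists_forcesMonoCopy_listRamsey (fun e _ => hcard e) hL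
    rw [one_mul]
    exact div_log_le_of_forcesMonoCopy
      (fun _ => not_isVertexCover_matchingGraph_of_subsingleton hr) hlog
      (fun e he => (hMcard e he).ge) hM
  · exact (Nat.cast_le.mpr (listRamsey_le (fun e _ => hcard e) hL)).trans hn
end
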